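/- arXiv:2408.10928 — 3 statements merged into one kernel-verified Lean document; each statement's English description precedes it below -/
import Mathlib

section
/- Let R be an associative unital ring and let 0 → M → C → M → 0 be a short exact sequence of left R-modules in which C is cotorsion. Then M is cotorsion. -/
universe u

open CategoryTheory

/-- A left module `M` over a ring `R` is *flat* if it satisfies Villamayor's equational
criterion of flatness; over an arbitrary associative unital ring this is equivalent to
the usual definition of flatness. -/
def Module.IsFlat (R : Type*) [Ring R] (M : Type*) [AddCommGroup M] [Module R M] : Prop :=
  ∀ (n : ℕ) (r : Fin n → R) (x : Fin n → M), ∑ i, r i • x i = 0 →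
    ∃ (m : ℕ) (a : Fin n → Fin m → R) (y : Fin m → M),
      (∀ i, x i = ∑ j, a i j • y j) ∧ ∀ j, ∑ i, r i * a i j = 0

/-- The `n`-th Ext group of two left `R`-modules, as an abelian group
(computed in the abelian category `ModuleCat R` by deriving the Hom functor). -/
def ModuleCat.extGroup {R : Type u} [Ring R] (F C : ModuleCat.{u} R) (n : ℕ) : Type u :=
  ((Ext ℤ (ModuleCat.{u} R) n).obj (Opposite.op F)).obj C

/-- A left `R`-module `C` is *cotorsion* if `Ext¹_R(F, C) = 0` for every flat left
`R`-module `F`. -/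
def ModuleCat.IsCotorsion {R : Type u} [Ring R] (C : ModuleCat.{u} R) : Prop :=
  ∀ F : ModuleCat.{u} R, Module.IsFlat R F → Subsingleton (F.extGroup C 1)

namespace CotPer

theorem ext_one_iff {R : Type u} [Ring R] (F C : ModuleCat.{u} R) (P : ProjectiveResolution F) :
    Subsingleton (F.extGroup C 1) ↔ ∀ f : P.complex.X 1 ⟶ C, P.complex.d 2 1 ≫ f = 0 →
      ∃ g : P.complex.X 0 ⟶ C, P.complex.d 1 0 ≫ g = f := by
  have h1 : Subsingleton (F.extGroup C 1) ↔
      Limits.IsZero ((P.complex.linearYonedaObj ℤ C).homology 1) := by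
    rw [← (P.isoExt (R := ℤ) 1 C).isZero_iff, ModuleCat.isZero_iff_subsingleton]
    rfl
  rw [h1, ← HomologicalComplex.exactAt_iff_isZero_homology,
    HomologicalComplex.exactAt_iff' _ 0 1 2 (by simp) (by simp), ShortComplex.moduleCat_exact_iff]
  rfl

theorem factor {R : Type*} [Ring R] {A B D : Type*} [AddCommGroup A] [AddCommGroup B]
    [AddCommGroup D] [Module R A] [Module R B] [Module R D] (q : A →ₗ[R] B)
    (hq : Function.Surjective q) (f : A →ₗ[R] D) (h : ∀ x, q x = 0 → f x = 0) :
    ∃ g : B →ₗ[R] D, ∀ x, g (q x) = f x := by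
  refine ⟨((LinearMap.ker q).liftQ f (fun x hx => h x hx)) ∘ₗ
    (q.quotKerEquivOfSurjective hq).symm.toLinearMap, fun x => ?_⟩
  have : (q.quotKerEquivOfSurjective hq).symm (q x) = Submodule.Quotient.mk x := by
    rw [LinearEquiv.symm_apply_eq]; rfl
  rw [LinearMap.comp_apply, LinearEquiv.coe_coe, this]
  rfl

theorem exists_pres {R : Type u} [Ring R] (F : ModuleCat.{u} R) :
    ∃ (A B D : ModuleCat.{u} R) (a : A →ₗ[R] B) (b : B →ₗ[R] D) (e : D →ₗ[R] F),
      Module.Projective R D ∧ Function.Surjective e ∧ (∀ x, b (a x) = 0) ∧ (∀ x, e (b x) = 0) ∧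
      (∀ x, e x = 0 → ∃ y, b y = x) ∧
      ∀ C : ModuleCat.{u} R, Subsingleton (F.extGroup C 1) ↔
        ∀ f : B →ₗ[R] C, (∀ x, f (a x) = 0) → ∃ g : D →ₗ[R] C, ∀ x, g (b x) = f x := by
  have P := projectiveResolution F
  have hS0 : Function.Surjective (P.π.f 0) := by
    rw [← ModuleCat.epi_iff_surjective]; infer_instance
  refine ⟨P.complex.X 2, P.complex.X 1, P.complex.X 0, (P.complex.d 2 1).hom,
    (P.complex.d 1 0).hom, (P.π.f 0).hom, ?_, hS0, ?_, ?_, ?_, ?_⟩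
  · rw [IsProjective.iff_projective]; exact P.projective 0
  · exact fun x => ConcreteCategory.congr_hom (P.complex.d_comp_d 2 1 0) x
  · exact fun x => ConcreteCategory.congr_hom P.complex_d_comp_π_f_zero x
  · exact (ShortComplex.moduleCat_exact_iff _).1 P.exact₀
  · intro C
    rw [ext_one_iff F C P]
    constructor
    · intro h f hf
      obtain ⟨g, hg⟩ := h (ModuleCat.ofHom f) (by ext x; exact hf x)
      exact ⟨g.hom, fun x => ConcreteCategory.congr_hom hg x⟩
    · intro h f hf
      obtain ⟨g, hg⟩ := h f.hom (fun x => ConcreteCategory.congr_hom hf x)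
      exact ⟨ModuleCat.ofHom g, by ext x; exact hg x⟩

theorem extend_of_ext {R : Type u} [Ring R] (C : ModuleCat.{u} R) (hC : C.IsCotorsion)
    {U D : Type u} [AddCommGroup U] [AddCommGroup D] [Module R U] [Module R D] (V : Submodule R U)
    (q : U →ₗ[R] D) (hq : Function.Surjective q) (hV : LinearMap.ker q = V)
    (hD : Module.IsFlat R D) (g : V →ₗ[R] C) : ∃ g' : U →ₗ[R] C, ∀ x : V, g' x = g x := by
  obtain ⟨P2, P1, P0, a, b, e, hP, he, hba, heb, hex, hiff⟩ := exists_pres (ModuleCat.of R D)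
  have hE := (hiff C).1 (hC (ModuleCat.of R D) hD)
  obtain ⟨l, hl⟩ := Module.projective_lifting_property q e hq
  have hl' : ∀ x, q (l x) = e x := fun x => LinearMap.congr_fun hl x
  let c : P1 →ₗ[R] V := LinearMap.codRestrict V (l ∘ₗ b) (by
    intro c
    rw [← hV, LinearMap.mem_ker, LinearMap.comp_apply, hl']
    exact heb c)
  have hc : ∀ x, (c x : U) = l (b x) := fun x => rfl
  obtain ⟨h, hh⟩ := hE (g ∘ₗ c) (by
    intro x
    have h0 : c (a x) = 0 := by
      apply Subtype.ext
      rw [hc, hba, map_zero]; rfl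
    rw [LinearMap.comp_apply, h0, map_zero])
  obtain ⟨g', hg'⟩ := factor (LinearMap.coprod V.subtype l)
    (fun u => by
      obtain ⟨x, hx⟩ := he (q u)
      refine ⟨(⟨u - l x, ?_⟩, x), by simp⟩
      rw [← hV, LinearMap.mem_ker, map_sub, hl', hx, sub_self])
    (LinearMap.coprod g h) (by
      rintro ⟨v, x⟩ hvx
      simp only [LinearMap.coprod_apply, Submodule.subtype_apply] at hvx ⊢
      have hv : q v = 0 := by rw [← LinearMap.mem_ker, hV]; exact v.2
      have : e x = 0 := by
        rw [← hl']
        have := congrArg q hvx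
        rwa [map_add, hv, zero_add, map_zero] at this
      obtain ⟨y, rfl⟩ := hex x this
      have hva : v = - c y := by
        apply Subtype.ext
        rw [Submodule.coe_neg, hc]
        exact eq_neg_of_add_eq_zero_left hvx
      rw [hva, map_neg, hh, LinearMap.comp_apply, neg_add_cancel])
  refine ⟨g', fun x => ?_⟩
  have := hg' (x, 0)
  simpa using this

theorem final_step {R : Type u} [Ring R] (M C : ModuleCat.{u} R)
    (i : M →ₗ[R] C) (p : C →ₗ[R] M)
    (hi : Function.Injective i) (hexact : Function.Exact i p)
    (F : ModuleCat.{u} R) (hFC : Subsingleton (F.extGroup C 1))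
    (hL : ∀ f : F →ₗ[R] M, ∃ g : F →ₗ[R] C, ∀ x, p (g x) = f x) :
    Subsingleton (F.extGroup M 1) := by
  obtain ⟨P2, P1, P0, a, b, e, hP, he, hba, heb, hex, hiff⟩ := exists_pres F
  rw [hiff] at hFC ⊢
  intro f hf
  obtain ⟨h, hh⟩ := hFC (i ∘ₗ f) (fun x => by rw [LinearMap.comp_apply, hf, map_zero])
  obtain ⟨k, hk⟩ := factor e he (p ∘ₗ h) (by
    intro x hx
    obtain ⟨y, rfl⟩ := hex x hx
    rw [LinearMap.comp_apply, hh]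
    exact (hexact _).2 ⟨_, rfl⟩)
  obtain ⟨k', hk'⟩ := hL k
  have hw : ∀ x, ∃ m, i m = h x - k' (e x) := fun x => (hexact _).1 (by
    rw [map_sub, hk', sub_eq_zero]
    exact (hk x).symm)
  choose m hm using hw
  refine ⟨
    { toFun := m
      map_add' := fun x y => hi (by simp only [map_add, hm]; abel)
      map_smul' := fun x y => hi (by simp only [map_smul, hm, RingHom.id_apply, smul_sub]) }, ?_⟩
  intro x
  apply hi
  change i (m (b x)) = i (f x)
  rw [hm, hh, heb, map_zero, sub_zero]
  rfl

end CotPer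

namespace CotPer

/-- Flatness of the subquotient `U / L`, elementwise. -/
def RFlat {R : Type*} [Ring R] {W : Type*} [AddCommGroup W] [Module R W]
    (U L : Submodule R W) : Prop :=
  ∀ (n : ℕ) (r : Fin n → R) (x : Fin n → W), (∀ i, x i ∈ U) → ∑ i, r i • x i ∈ L →
    ∃ (m : ℕ) (a : Fin n → Fin m → R) (y : Fin m → W), (∀ j, y j ∈ U) ∧
      (∀ i, x i - ∑ j, a i j • y j ∈ L) ∧ ∀ j, ∑ i, r i * a i j = 0

/-- Every map `U / L → M` lifts along `p : C → M`. -/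
def RLift {R : Type*} [Ring R] {W M C : Type*} [AddCommGroup W] [Module R W]
    [AddCommGroup M] [Module R M] [AddCommGroup C] [Module R C] (p : C →ₗ[R] M)
    (U L : Submodule R W) : Prop :=
  ∀ f : U →ₗ[R] M, (∀ x : U, (x : W) ∈ L → f x = 0) →
    ∃ g : U →ₗ[R] C, (∀ x : U, (x : W) ∈ L → g x = 0) ∧ ∀ x, p (g x) = f x

/-- Maps to `C` extend along inclusions with flat cokernel. -/
def ExtProp (R : Type u) [Ring R] (C : Type u) [AddCommGroup C] [Module R C] : Prop :=
  ∀ (W : Type u) [AddCommGroup W] [Module R W] (U V : Submodule R W) (_ : V ≤ U),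
    RFlat U V → ∀ g : V →ₗ[R] C, ∃ g' : U →ₗ[R] C,
      ∀ (x : W) (hV : x ∈ V) (hU : x ∈ U), g' ⟨x, hU⟩ = g ⟨x, hV⟩

theorem extProp_of_cotorsion {R : Type u} [Ring R] (C : ModuleCat.{u} R) (hC : C.IsCotorsion) :
    ExtProp R C := by
  intro W _ _ U V hVU hfl g
  let V' : Submodule R U := V.comap U.subtype
  have hD : Module.IsFlat R (U ⧸ V') := by
    intro n r x hx
    choose x' hx' using fun i => Submodule.Quotient.mk_surjective V' (x i)
    have h1 : ∑ i, r i • (x' i : W) ∈ V := by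
      have : (Submodule.Quotient.mk (∑ i, r i • x' i) : U ⧸ V') = 0 := by
        rw [← Submodule.mkQ_apply, map_sum, ← hx]
        exact Finset.sum_congr rfl fun i _ => by
          rw [map_smul, Submodule.mkQ_apply, hx']
      rw [Submodule.Quotient.mk_eq_zero] at this
      have h2 : ((∑ i, r i • x' i : U) : W) ∈ V := this
      simpa using h2
    obtain ⟨m, a, y, hy, hxy, ha⟩ := hfl n r (fun i => x' i) (fun i => (x' i).2) h1
    refine ⟨m, a, fun j => V'.mkQ ⟨y j, hy j⟩, fun i => ?_, ha⟩
    rw [← hx', ← Submodule.mkQ_apply]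
    simp only [← map_smul, ← map_sum]
    rw [← sub_eq_zero, ← map_sub, Submodule.mkQ_apply, Submodule.Quotient.mk_eq_zero]
    have := hxy i
    change ((x' i - ∑ j, a i j • (⟨y j, hy j⟩ : U) : U) : W) ∈ V
    simpa using this
  let e : V' →ₗ[R] V := LinearMap.codRestrict V (U.subtype ∘ₗ V'.subtype) (fun c => c.2)
  obtain ⟨g', hg'⟩ := extend_of_ext C hC V' V'.mkQ V'.mkQ_surjective V'.ker_mkQ hD (g ∘ₗ e)
  exact ⟨g', fun x hV hU => hg' ⟨⟨x, hU⟩, hV⟩⟩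

section
variable {R : Type u} [Ring R] {M C : Type u} [AddCommGroup M] [Module R M] [AddCommGroup C]
  [Module R C] {p : C →ₗ[R] M} {W : Type u} [AddCommGroup W] [Module R W]
  {W' : Type u} [AddCommGroup W'] [Module R W']

theorem lift_ext (hext : ExtProp R C) {U V : Submodule R W} (hVU : V ≤ U) (hfl : RFlat U V)
    (hl : RLift p U V) (f : U →ₗ[R] M) (g : V →ₗ[R] C)
    (hg : ∀ (x : W) (hV : x ∈ V) (hU : x ∈ U), p (g ⟨x, hV⟩) = f ⟨x, hU⟩) :
    ∃ g' : U →ₗ[R] C, (∀ x, p (g' x) = f x) ∧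
      ∀ (x : W) (hV : x ∈ V) (hU : x ∈ U), g' ⟨x, hU⟩ = g ⟨x, hV⟩ := by
  obtain ⟨g1, hg1⟩ := hext W U V hVU hfl g
  obtain ⟨g2, hg2, hg3⟩ := hl (f - p ∘ₗ g1) (by
    rintro ⟨x, hU⟩ hx
    simp [hg1 x hx hU, hg x hx hU])
  refine ⟨g1 + g2, fun x => by simp [hg3], fun x hV hU => ?_⟩
  simp [hg2 ⟨x, hU⟩ hV, hg1 x hV hU]

theorem lift_quot (hext : ExtProp R C) (i : M →ₗ[R] C) (hi : Function.Injective i)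
    (hexact : Function.Exact i p) {U V L : Submodule R W} (hVU : V ≤ U) (hLV : L ≤ V)
    (hfl : RFlat U V) (h1 : RLift p V L) (h2 : RLift p U L) : RLift p U V := by
  intro f hf
  obtain ⟨g, hgL, hg⟩ := h2 f (fun x hx => hf x (hLV hx))
  have hm : ∀ x : V, ∃ m, i m = g ⟨x, hVU x.2⟩ := fun x =>
    (hexact _).1 (by rw [hg]; exact hf _ x.2)
  choose m hm using hm
  let k : V →ₗ[R] M :=
    { toFun := m
      map_add' := fun x y => hi (by rw [map_add, hm, hm, hm, ← map_add]; rfl)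
      map_smul' := fun r x => hi (by
        rw [map_smul, hm, hm, RingHom.id_apply, ← map_smul]; rfl) }
  have hk : ∀ x, i (k x) = g ⟨x, hVU x.2⟩ := hm
  obtain ⟨k1, -, hk1⟩ := h1 k (fun x hx => hi (by rw [hk, map_zero]; exact hgL _ hx))
  obtain ⟨k2, hk2⟩ := hext W U V hVU hfl k1
  refine ⟨g - i ∘ₗ p ∘ₗ k2, fun x hx => ?_, fun x => ?_⟩
  · obtain ⟨x, hU⟩ := x
    simp [hk2 x hx hU, hk1, hk]
  · have : p (i (p (k2 x))) = 0 := (hexact _).2 ⟨_, rfl⟩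
    simp [hg, this]

theorem flat_transport {U L : Submodule R W} {U' L' : Submodule R W'} (φ : W →ₗ[R] W')
    (h1 : ∀ x ∈ U, φ x ∈ U') (h2 : ∀ y ∈ U', ∃ x ∈ U, φ x = y)
    (h3 : ∀ x ∈ U, φ x ∈ L' ↔ x ∈ L) (h : RFlat U' L') : RFlat U L := by
  have hU : ∀ {x}, x ∈ U → x ∈ U := fun h => h
  intro n r x hx hr
  have hs : ∑ i, r i • x i ∈ U := Submodule.sum_mem _ fun i _ => U.smul_mem _ (hx i)
  obtain ⟨m, a, y, hy, hxy, ha⟩ := h n r (fun i => φ (x i)) (fun i => h1 _ (hx i)) (by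
    have := (h3 _ hs).2 hr
    simpa using this)
  choose z hz hzy using fun j => h2 (y j) (hy j)
  refine ⟨m, a, z, hz, fun i => ?_, ha⟩
  rw [← h3 _ (U.sub_mem (hx i) (Submodule.sum_mem _ fun j _ => U.smul_mem _ (hz j)))]
  simpa [hzy] using hxy i

theorem lift_transport {U L : Submodule R W} {U' L' : Submodule R W'} (φ : W →ₗ[R] W')
    (h1 : ∀ x ∈ U, φ x ∈ U') (h2 : ∀ y ∈ U', ∃ x ∈ U, φ x = y)
    (h3 : ∀ x ∈ U, φ x ∈ L' ↔ x ∈ L) : RLift p U' L' ↔ RLift p U L := by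
  let ψ : U →ₗ[R] U' := (φ ∘ₗ U.subtype).codRestrict U' (fun x => h1 _ x.2)
  have hψ : ∀ x, (ψ x : W') = φ x := fun x => rfl
  have hs : Function.Surjective ψ := by
    rintro ⟨y, hy⟩
    obtain ⟨x, hx, rfl⟩ := h2 y hy
    exact ⟨⟨x, hx⟩, rfl⟩
  have hL : ∀ x, (ψ x : W') ∈ L' ↔ (x : W) ∈ L := fun x => by rw [hψ]; exact h3 _ x.2
  have h0 : ∀ x, ψ x = 0 → (x : W) ∈ L := fun x hx => by
    rw [← hL, hx]; exact L'.zero_mem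
  constructor
  · intro h f hf
    obtain ⟨f', hf'⟩ := factor ψ hs f (fun x hx => hf _ (h0 x hx))
    obtain ⟨g, hg, hg'⟩ := h f' (fun y hy => by
      obtain ⟨x, rfl⟩ := hs y
      rw [hf']; exact hf _ ((hL x).1 hy))
    exact ⟨g ∘ₗ ψ, fun x hx => hg _ ((hL x).2 hx), fun x => by
      rw [LinearMap.comp_apply, hg', hf']⟩
  · intro h f hf
    obtain ⟨g, hg, hg'⟩ := h (f ∘ₗ ψ) (fun x hx => hf _ ((hL x).2 hx))
    obtain ⟨g', hgg⟩ := factor ψ hs g (fun x hx => hg _ (h0 x hx))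
    refine ⟨g', fun y hy => ?_, fun y => ?_⟩
    · obtain ⟨x, rfl⟩ := hs y
      rw [hgg]; exact hg _ ((hL x).1 hy)
    · obtain ⟨x, rfl⟩ := hs y
      rw [hgg, hg']; rfl

end

end CotPer

namespace CotPer

section
variable {R : Type u} [Ring R] {M C : Type u} [AddCommGroup M] [Module R M] [AddCommGroup C]
  [Module R C] {p : C →ₗ[R] M} {W : Type u} [AddCommGroup W] [Module R W]
  {ι : Type u} [LinearOrder ι]

/-- The union of `N` and the `Z i`, `i ∈ I`. -/
def stage (N : Submodule R W) (Z : ι → Submodule R W) (hZ : Monotone Z) (hN : ∀ i, N ≤ Z i)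
    (I : Set ι) : Submodule R W where
  carrier := {x | x ∈ N ∨ ∃ i ∈ I, x ∈ Z i}
  zero_mem' := Or.inl N.zero_mem
  add_mem' := by
    rintro x y (hx | ⟨i, hi, hx⟩) (hy | ⟨j, hj, hy⟩)
    · exact Or.inl (N.add_mem hx hy)
    · exact Or.inr ⟨j, hj, (Z j).add_mem (hN j hx) hy⟩
    · exact Or.inr ⟨i, hi, (Z i).add_mem hx (hN i hy)⟩
    · rcases le_total i j with h | h
      · exact Or.inr ⟨j, hj, (Z j).add_mem (hZ h hx) hy⟩
      · exact Or.inr ⟨i, hi, (Z i).add_mem hx (hZ h hy)⟩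
  smul_mem' := by
    rintro r x (hx | ⟨i, hi, hx⟩)
    · exact Or.inl (N.smul_mem r hx)
    · exact Or.inr ⟨i, hi, (Z i).smul_mem r hx⟩

theorem mem_stage {N : Submodule R W} {Z : ι → Submodule R W} {hZ : Monotone Z}
    {hN : ∀ i, N ≤ Z i} {I : Set ι} {x : W} :
    x ∈ stage N Z hZ hN I ↔ x ∈ N ∨ ∃ i ∈ I, x ∈ Z i := Iff.rfl

theorem eklof [WellFoundedLT ι] (hext : ExtProp R C) (N : Submodule R W) (Z : ι → Submodule R W)
    (hZ : Monotone Z) (hN : ∀ i, N ≤ Z i)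
    (hfl : ∀ i, RFlat (Z i) (stage N Z hZ hN (Set.Iio i)))
    (hli : ∀ i, RLift p (Z i) (stage N Z hZ hN (Set.Iio i))) :
    RLift p (stage N Z hZ hN Set.univ) N := by
  intro f hf
  have hT : ∀ {I x}, x ∈ stage N Z hZ hN I → x ∈ stage N Z hZ hN Set.univ := by
    rintro I x (hx | ⟨i, hi, hx⟩)
    · exact Or.inl hx
    · exact Or.inr ⟨i, trivial, hx⟩
  let S : Set (W →ₗ.[R] C) := {g | (∃ I : Set ι, IsLowerSet I ∧ g.domain = stage N Z hZ hN I) ∧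
    (∀ x : g.domain, (x : W) ∈ N → g x = 0) ∧
    ∀ (x : W) (hx : x ∈ g.domain) (hxT : x ∈ stage N Z hZ hN Set.univ),
      p (g ⟨x, hx⟩) = f ⟨x, hxT⟩}
  let g0 : W →ₗ.[R] C := ⟨stage N Z hZ hN ∅, 0⟩
  have hg0 : g0 ∈ S := by
    refine ⟨⟨∅, isLowerSet_empty, rfl⟩, fun x _ => rfl, fun x hx hxT => ?_⟩
    have hxN : x ∈ N := by
      rcases hx with hx | ⟨i, hi, hx⟩
      · exact hx
      · exact absurd hi (Set.notMem_empty i)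
    rw [hf ⟨x, hxT⟩ hxN]
    exact map_zero p
  obtain ⟨g, -, hgmax⟩ := zorn_le_nonempty₀ S (by
    intro c hcS hc y hy
    have hd : DirectedOn (· ≤ ·) c := hc.directedOn
    refine ⟨LinearPMap.sSup c hd, ⟨?_, ?_, ?_⟩, fun z hz => LinearPMap.le_sSup hd hz⟩
    · have hI : ∀ g ∈ c, ∃ I : Set ι, IsLowerSet I ∧ g.domain = stage N Z hZ hN I :=
        fun g hg => (hcS hg).1
      choose! I hI hI' using hI
      refine ⟨⋃ g ∈ c, I g, isLowerSet_iUnion fun g => isLowerSet_iUnion fun hg => hI g hg, ?_⟩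
      ext x
      rw [LinearPMap.mem_domain_sSup_iff ⟨y, hy⟩, mem_stage]
      constructor
      · rintro ⟨g, hg, hx⟩
        rw [hI' g hg] at hx
        rcases hx with hx | ⟨i, hi, hx⟩
        · exact Or.inl hx
        · exact Or.inr ⟨i, Set.mem_iUnion₂.2 ⟨g, hg, hi⟩, hx⟩
      · rintro (hx | ⟨i, hi, hx⟩)
        · exact ⟨y, hy, by rw [hI' y hy]; exact Or.inl hx⟩
        · obtain ⟨g, hg, hi⟩ := Set.mem_iUnion₂.1 hi
          exact ⟨g, hg, by rw [hI' g hg]; exact Or.inr ⟨i, hi, hx⟩⟩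
    · rintro ⟨x, hx⟩ hxN
      obtain ⟨g, hg, hxg⟩ := (LinearPMap.mem_domain_sSup_iff ⟨y, hy⟩ hd).1 hx
      have := LinearPMap.sSup_apply hd hg ⟨x, hxg⟩
      exact this.trans ((hcS hg).2.1 _ hxN)
    · intro x hx hxT
      obtain ⟨g, hg, hxg⟩ := (LinearPMap.mem_domain_sSup_iff ⟨y, hy⟩ hd).1 hx
      have := LinearPMap.sSup_apply hd hg ⟨x, hxg⟩
      exact (congrArg p this).trans ((hcS hg).2.2 _ hxg hxT)) g0 hg0
  obtain ⟨⟨⟨I, hI, hdom⟩, hgN, hgf⟩, hmax⟩ := hgmax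
  obtain ⟨D, g⟩ := g
  change D = _ at hdom
  have hall : ∀ γ, Z γ ≤ D := by
    by_contra hne
    push Not at hne
    have hne' : {γ | ¬ Z γ ≤ D}.Nonempty := hne
    let γ := WellFounded.min (wellFounded_lt (α := ι)) _ hne'
    have hγ : ¬ Z γ ≤ D := WellFounded.min_mem (wellFounded_lt (α := ι)) _ hne'
    have hγ' : ∀ δ, δ < γ → Z δ ≤ D := fun δ hδ => by
      by_contra h
      exact WellFounded.not_lt_min (wellFounded_lt (α := ι)) {γ | ¬ Z γ ≤ D} h hδ
    have hγI : ∀ i ∈ I, i < γ := by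
      intro i hi
      by_contra hh
      apply hγ
      intro x hx
      rw [hdom]
      exact Or.inr ⟨γ, hI (not_lt.1 hh) hi, hx⟩
    have hdom' : D = stage N Z hZ hN (Set.Iio γ) := by
      apply le_antisymm
      · rw [hdom]
        rintro x (hx | ⟨i, hi, hx⟩)
        · exact Or.inl hx
        · exact Or.inr ⟨i, hγI i hi, hx⟩
      · rintro x (hx | ⟨i, hi, hx⟩)
        · rw [hdom]; exact Or.inl hx
        · exact hγ' i hi hx
    clear_value γ
    clear hdom
    subst hdom'
    have hle : stage N Z hZ hN (Set.Iio γ) ≤ Z γ := by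
      rintro x (hx | ⟨i, hi, hx⟩)
      · exact hN γ hx
      · exact hZ (le_of_lt hi) hx
    have hle2 : Z γ ≤ stage N Z hZ hN Set.univ := fun x hx => Or.inr ⟨γ, trivial, hx⟩
    obtain ⟨g', hg'1, hg'2⟩ := lift_ext hext hle (hfl γ) (hli γ)
      (f ∘ₗ Submodule.inclusion hle2) g (fun x hV hU => hgf x hV _)
    have hmem : (⟨Z γ, g'⟩ : W →ₗ.[R] C) ∈ S := by
      refine ⟨⟨Set.Iic γ, isLowerSet_Iic γ, ?_⟩, ?_, ?_⟩
      · ext x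
        refine ⟨fun hx => Or.inr ⟨γ, le_refl γ, hx⟩, ?_⟩
        rintro (hx | ⟨i, hi, hx⟩)
        · exact hN γ hx
        · exact hZ hi hx
      · rintro ⟨x, hx⟩ hxN
        exact (hg'2 x (Or.inl hxN) hx).trans (hgN ⟨x, Or.inl hxN⟩ hxN)
      · intro x hx hxT
        exact hg'1 ⟨x, hx⟩
    have hle3 := hmax hmem ⟨hle, fun x y hxy => by
      obtain ⟨x, hx⟩ := x
      obtain ⟨y, hy⟩ := y
      obtain rfl : x = y := hxy
      exact (hg'2 x hx hy).symm⟩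
    exact hγ hle3.1
  have hdom' : D = stage N Z hZ hN Set.univ := by
    apply le_antisymm
    · rw [hdom]
      exact fun x hx => hT hx
    · rintro x (hx | ⟨i, hi, hx⟩)
      · rw [hdom]; exact Or.inl hx
      · exact hall i hx
  clear hdom
  subst hdom'
  exact ⟨g, hgN, fun x => hgf x x.2 x.2⟩
end

end CotPer

namespace CotPer

section
open Classical
variable {R : Type u} [Ring R] {M C : Type u} [AddCommGroup M] [Module R M] [AddCommGroup C]
  [Module R C] {p : C →ₗ[R] M} {P : Type u} [AddCommGroup P] [Module R P]
  {ι : Type u} [LinearOrder ι]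

/-- Sum of the coordinates lying in `I`. -/
noncomputable def sig (U : ι → Submodule R P) (I : Set ι) : (Π₀ i, U i) →ₗ[R] P :=
  DFinsupp.lsum ℕ (fun i => if i ∈ I then (U i).subtype else 0)

theorem sig_single (U : ι → Submodule R P) (I : Set ι) (i : ι) (x : U i) :
    sig U I (DFinsupp.single i x) = if i ∈ I then (x : P) else 0 := by
  rw [sig, DFinsupp.lsum_single]
  split_ifs <;> rfl

theorem sig_mem (U : ι → Submodule R P) (I : Set ι) (X : Submodule R P) (h : Π₀ i, U i)
    (hX : ∀ i ∈ I, (h i : P) ∈ X) : sig U I h ∈ X := by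
  rw [sig, DFinsupp.lsum_apply_apply]
  refine _root_.dfinsuppSumAddHom_mem X _ _ (fun i _ => ?_)
  by_cases hi : i ∈ I
  · simpa [hi] using hX i hi
  · simp [hi]

theorem sig_sub (U : ι → Submodule R P) (I J : Set ι) (hIJ : I ⊆ J) (h : Π₀ i, U i) :
    sig U J h - sig U I h = sig U (J \ I) h := by
  suffices hs : sig U J - sig U I = sig U (J \ I) from LinearMap.congr_fun hs h
  refine DFinsupp.lhom_ext fun i x => ?_
  rw [LinearMap.sub_apply, sig_single, sig_single, sig_single]
  by_cases hi : i ∈ I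
  · simp [hi, hIJ hi]
  · simp [hi]

theorem sig_sub_mem (U : ι → Submodule R P) (I J : Set ι) (hIJ : I ⊆ J) (X : Submodule R P)
    (h : Π₀ i, U i) (hX : ∀ i ∈ J, i ∉ I → (h i : P) ∈ X) :
    sig U J h ∈ X ↔ sig U I h ∈ X := by
  have h1 : sig U J h - sig U I h ∈ X := by
    rw [sig_sub U I J hIJ]
    exact sig_mem U _ X h fun i hi => hX i hi.1 hi.2
  constructor
  · intro h2
    have := X.sub_mem h2 h1
    simpa using this
  · intro h2
    have := X.add_mem h2 h1
    simpa using this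

theorem sig_Iic (U : ι → Submodule R P) (γ : ι) (h : Π₀ i, U i) :
    sig U (Set.Iic γ) h = sig U (Set.Iio γ) h + h γ := by
  have h1 := sig_sub U (Set.Iio γ) (Set.Iic γ) Set.Iio_subset_Iic_self h
  have h2 : sig U (Set.Iic γ \ Set.Iio γ) h = h γ := by
    let c : (Π₀ i, U i) →ₗ[R] P := (U γ).subtype ∘ₗ DFinsupp.lapply γ
    suffices hs : sig U (Set.Iic γ \ Set.Iio γ) = c from LinearMap.congr_fun hs h
    refine DFinsupp.lhom_ext fun i x => ?_
    rw [sig_single]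
    by_cases hi : i = γ
    · subst hi
      simp [c]
    · have : i ∉ Set.Iic γ \ Set.Iio γ := by
        rintro ⟨h1, h2⟩
        exact hi (le_antisymm h1 (not_lt.1 h2))
      rw [if_neg this]
      simp [c, DFinsupp.single_eq_of_ne (Ne.symm hi)]
  rw [← h2, ← h1]; abel

/-- Coordinatewise in `L`. -/
def coordN (U L : ι → Submodule R P) : Submodule R (Π₀ i, U i) where
  carrier := {h | ∀ i, (h i : P) ∈ L i}
  zero_mem' := fun i => by simp
  add_mem' := fun {a b} ha hb i => by simpa using (L i).add_mem (ha i) (hb i)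
  smul_mem' := fun r a ha i => by simpa using (L i).smul_mem r (ha i)

noncomputable def coordZ (U L : ι → Submodule R P) (γ : ι) : Submodule R (Π₀ i, U i) where
  carrier := {h | (∀ i, γ < i → (h i : P) ∈ L i) ∧ sig U (Set.Iic γ) h ∈ L γ}
  zero_mem' := ⟨fun i _ => by simp, by simp⟩
  add_mem' := fun {a b} ha hb => ⟨fun i hi => by
    simpa using (L i).add_mem (ha.1 i hi) (hb.1 i hi), by
    rw [map_add]; exact (L γ).add_mem ha.2 hb.2⟩
  smul_mem' := fun r a ha => ⟨fun i hi => by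
    simpa using (L i).smul_mem r (ha.1 i hi), by
    rw [map_smul]; exact (L γ).smul_mem r ha.2⟩

theorem coordZ_mono (U L : ι → Submodule R P) (hL : Monotone L) : Monotone (coordZ U L) := by
  rintro γ γ' hγ h ⟨h1, h2⟩
  refine ⟨fun i hi => h1 i (hγ.trans_lt hi), ?_⟩
  rw [sig_sub_mem U (Set.Iic γ) _ (Set.Iic_subset_Iic.2 hγ) (L γ') h]
  · exact hL hγ h2
  · exact fun i hi hi' => hL hi (h1 i (not_le.1 hi'))

theorem coordN_le (U L : ι → Submodule R P) (hL : Monotone L) (γ : ι) :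
    coordN U L ≤ coordZ U L γ :=
  fun h hh => ⟨fun i _ => hh i, sig_mem U _ _ h fun i hi => hL hi (hh i)⟩

theorem coord_key (U L : ι → Submodule R P) (hL : Monotone L) (I : Set ι) (hI : IsLowerSet I)
    (hne : I.Nonempty) (h : Π₀ i, U i)
    (hs : sig U I h ∈ stage ⊥ L hL (fun _ => bot_le) I) :
    ∃ δ ∈ I, sig U (Set.Iic δ) h ∈ L δ ∧ ∀ i ∈ I, δ < i → h i = 0 := by
  obtain ⟨δ0, hδ0, hs0⟩ : ∃ δ0 ∈ I, sig U I h ∈ L δ0 := by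
    rcases hs with hs | hs
    · obtain ⟨δ, hδ⟩ := hne
      refine ⟨δ, hδ, ?_⟩
      rw [(Submodule.mem_bot R).1 hs]
      exact (L δ).zero_mem
    · exact hs
  let T : Finset ι := insert δ0 (h.support.filter (· ∈ I))
  have hT : T.Nonempty := Finset.insert_nonempty _ _
  let δ := T.max' hT
  have hδT : δ ∈ T := T.max'_mem hT
  have hδI : δ ∈ I := by
    rcases Finset.mem_insert.1 hδT with h1 | h1
    · rw [h1]; exact hδ0
    · exact (Finset.mem_filter.1 h1).2
  have hz : ∀ i ∈ I, δ < i → h i = 0 := by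
    intro i hi hlt
    by_contra hne
    have : i ∈ T := Finset.mem_insert_of_mem
      (Finset.mem_filter.2 ⟨DFinsupp.mem_support_iff.2 hne, hi⟩)
    exact absurd (T.le_max' i this) (not_le.2 hlt)
  refine ⟨δ, hδI, ?_, hz⟩
  rw [← sig_sub_mem U (Set.Iic δ) I (fun i hi => hI hi hδI) (L δ) h]
  · exact hL (T.le_max' δ0 (Finset.mem_insert_self _ _)) hs0
  · intro i hi hi'
    rw [hz i hi (not_le.1 hi')]
    exact (L δ).zero_mem

theorem directSum_lift (U L : ι → Submodule R P) (hli : ∀ i, RLift p (U i) (L i)) :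
    RLift p (⊤ : Submodule R (Π₀ i, U i)) (coordN U L) := by
  intro f hf
  let f' : (Π₀ i, U i) →ₗ[R] M := f ∘ₗ Submodule.topEquiv.symm.toLinearMap
  have hf' : ∀ x ∈ coordN U L, f' x = 0 := fun x hx => hf _ hx
  have hg : ∀ i, ∃ g : U i →ₗ[R] C, (∀ x : U i, (x : P) ∈ L i → g x = 0) ∧
      ∀ x, p (g x) = f' (DFinsupp.single i x) := by
    intro i
    refine hli i (f' ∘ₗ DFinsupp.lsingle (R := R) (M := fun i => U i) i) fun x hx => hf' _ fun j => ?_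
    by_cases hj : j = i
    · subst hj; simpa using hx
    · simp [DFinsupp.single_eq_of_ne hj]
  choose g hgL hg using hg
  let G : (Π₀ i, U i) →ₗ[R] C := DFinsupp.lsum ℕ g
  have hG : ∀ x, p (G x) = f' x := by
    suffices hs : p ∘ₗ G = f' from fun x => LinearMap.congr_fun hs x
    refine DFinsupp.lhom_ext fun i x => ?_
    simp only [G, LinearMap.comp_apply, DFinsupp.lsum_single, hg]
  refine ⟨G ∘ₗ Submodule.topEquiv.toLinearMap, fun x hx => ?_, fun x => hG x⟩
  change G x = 0
  rw [show G = DFinsupp.lsum ℕ g from rfl, DFinsupp.lsum_apply_apply]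
  have := _root_.dfinsuppSumAddHom_mem (⊥ : AddSubmonoid C) x.1
    (fun i => (g i).toAddMonoidHom) (fun i _ => by
      change g i (x.1 i) ∈ (⊥ : AddSubmonoid C)
      rw [hgL i _ (hx i)]; exact zero_mem _)
  exact AddSubmonoid.mem_bot.1 this

theorem chain_lift [WellFoundedLT ι] [Nonempty ι] (hext : ExtProp R C) (i : M →ₗ[R] C)
    (hi : Function.Injective i) (hexact : Function.Exact i p)
    (U L : ι → Submodule R P) (hU : Monotone U) (hL : Monotone L)
    (hli : ∀ γ, RLift p (U γ) (L γ))
    (hfl' : ∀ γ, RFlat (stage ⊥ U hU (fun _ => bot_le) (Set.Iio γ))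
      (stage ⊥ L hL (fun _ => bot_le) (Set.Iio γ)))
    (hli' : ∀ γ, RLift p (stage ⊥ U hU (fun _ => bot_le) (Set.Iio γ))
      (stage ⊥ L hL (fun _ => bot_le) (Set.Iio γ)))
    (hfl : RFlat (stage ⊥ U hU (fun _ => bot_le) Set.univ)
      (stage ⊥ L hL (fun _ => bot_le) Set.univ)) :
    RLift p (stage ⊥ U hU (fun _ => bot_le) Set.univ)
      (stage ⊥ L hL (fun _ => bot_le) Set.univ) := by
  have hZ := coordZ_mono U L hL
  have hN := coordN_le U L hL
  have hmap : ∀ (I : Set ι) (h : Π₀ i, U i), sig U I h ∈ stage ⊥ U hU (fun _ => bot_le) I :=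
    fun I h => sig_mem U I _ h fun j hj => Or.inr ⟨j, hj, (h j).2⟩
  have s1 : ∀ γ, ∀ y ∈ stage ⊥ U hU (fun _ => bot_le) (Set.Iio γ),
      ∃ x ∈ coordZ U L γ, sig U (Set.Iio γ) x = y := by
    rintro γ y (hy | ⟨δ, hδ, hy⟩)
    · exact ⟨0, zero_mem _, by rw [map_zero, (Submodule.mem_bot R).1 hy]⟩
    · have hδ' : δ < γ := hδ
      refine ⟨DFinsupp.single δ ⟨y, hy⟩ - DFinsupp.single γ ⟨y, hU hδ'.le hy⟩, ⟨?_, ?_⟩, ?_⟩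
      · intro j hj
        have h1 : j ≠ γ := hj.ne'
        have h2 : j ≠ δ := (hδ'.trans hj).ne'
        simp [DFinsupp.single_eq_of_ne h1, DFinsupp.single_eq_of_ne h2]
      · rw [map_sub, sig_single, sig_single]
        simp [hδ'.le]
      · rw [map_sub, sig_single, sig_single]
        simp [hδ']
  have s2 : ∀ γ, ∀ h ∈ coordZ U L γ,
      sig U (Set.Iio γ) h ∈ stage ⊥ L hL (fun _ => bot_le) (Set.Iio γ) ↔
        h ∈ stage (coordN U L) (coordZ U L) hZ hN (Set.Iio γ) := by
    rintro γ h ⟨hh1, hh2⟩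
    constructor
    · intro hs
      have hγ : (h γ : P) ∈ L γ := by
        have h1 : sig U (Set.Iio γ) h ∈ L γ := by
          rcases hs with hs | ⟨δ, hδ, hs⟩
          · rw [(Submodule.mem_bot R).1 hs]; exact zero_mem _
          · exact hL (le_of_lt hδ) hs
        rw [sig_Iic] at hh2
        exact (Submodule.add_mem_iff_right _ h1).1 hh2
      by_cases hne : (Set.Iio γ).Nonempty
      · obtain ⟨δ, hδ, h1, h2⟩ := coord_key U L hL _ (isLowerSet_Iio γ) hne h hs
        refine Or.inr ⟨δ, hδ, fun j hj => ?_, h1⟩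
        rcases lt_trichotomy j γ with hjγ | rfl | hjγ
        · rw [h2 j hjγ hj]; exact zero_mem _
        · exact hγ
        · exact hh1 j hjγ
      · refine Or.inl fun j => ?_
        rcases lt_trichotomy j γ with hjγ | rfl | hjγ
        · exact absurd ⟨j, hjγ⟩ hne
        · exact hγ
        · exact hh1 j hjγ
    · rintro (hs | ⟨δ, hδ, hs1, hs2⟩)
      · exact sig_mem U _ _ h fun j hj => Or.inr ⟨j, hj, hs j⟩
      · rw [sig_sub_mem U (Set.Iic δ) (Set.Iio γ) (fun j hj => lt_of_le_of_lt hj hδ)]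
        · exact Or.inr ⟨δ, hδ, hs2⟩
        · exact fun j hj hj' => Or.inr ⟨j, hj, hs1 j (not_le.1 hj')⟩
  have hE := eklof hext (coordN U L) (coordZ U L) hZ hN
    (fun γ => flat_transport (sig U (Set.Iio γ)) (fun x _ => hmap _ x) (s1 γ) (s2 γ) (hfl' γ))
    (fun γ => (lift_transport (p := p) (sig U (Set.Iio γ)) (fun x _ => hmap _ x)
      (s1 γ) (s2 γ)).1 (hli' γ))
  have t1 : ∀ y ∈ stage ⊥ U hU (fun _ => bot_le) Set.univ,
      ∃ x ∈ (⊤ : Submodule R (Π₀ i, U i)), sig U Set.univ x = y := by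
    rintro y (hy | ⟨δ, hδ, hy⟩)
    · exact ⟨0, zero_mem _, by rw [map_zero, (Submodule.mem_bot R).1 hy]⟩
    · exact ⟨DFinsupp.single δ ⟨y, hy⟩, trivial, by rw [sig_single]; simp⟩
  have t2 : ∀ h ∈ (⊤ : Submodule R (Π₀ i, U i)),
      sig U Set.univ h ∈ stage ⊥ L hL (fun _ => bot_le) Set.univ ↔
        h ∈ stage (coordN U L) (coordZ U L) hZ hN Set.univ := by
    intro h _
    constructor
    · intro hs
      obtain ⟨δ, hδ, h1, h2⟩ := coord_key U L hL _ isLowerSet_univ Set.univ_nonempty h hs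
      refine Or.inr ⟨δ, trivial, fun j hj => ?_, h1⟩
      rw [h2 j trivial hj]; exact zero_mem _
    · rintro (hs | ⟨δ, hδ, hs1, hs2⟩)
      · exact sig_mem U _ _ h fun j hj => Or.inr ⟨j, hj, hs j⟩
      · rw [sig_sub_mem U (Set.Iic δ) Set.univ (Set.subset_univ _)]
        · exact Or.inr ⟨δ, trivial, hs2⟩
        · exact fun j hj hj' => Or.inr ⟨j, hj, hs1 j (not_le.1 hj')⟩
  rw [lift_transport (p := p) (sig U Set.univ) (fun x _ => hmap _ x) t1 t2]
  exact lift_quot hext i hi hexact le_top (fun x hx => Or.inl hx)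
    (flat_transport (sig U Set.univ) (fun x _ => hmap _ x) t1 t2 hfl) hE
    (directSum_lift U L hli)

end

end CotPer

namespace CotPer

section
open Classical
variable {R : Type u} [Ring R] {M C : Type u} [AddCommGroup M] [Module R M] [AddCommGroup C]
  [Module R C] {p : C →ₗ[R] M} {P : Type u} [AddCommGroup P] [Module R P]
  {X : Type u}

/-- The union of the `Uf S` over finite subsets `S` of `T`. -/
def uni (Uf : Finset X → Submodule R P) (hU : Monotone Uf) (T : Set X) : Submodule R P where
  carrier := {x | ∃ S : Finset X, ↑S ⊆ T ∧ x ∈ Uf S}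
  zero_mem' := ⟨∅, by simp, zero_mem _⟩
  add_mem' := by
    rintro x y ⟨S, hS, hx⟩ ⟨S', hS', hy⟩
    exact ⟨S ∪ S', by rw [Finset.coe_union]; exact Set.union_subset hS hS',
      add_mem (hU Finset.subset_union_left hx) (hU Finset.subset_union_right hy)⟩
  smul_mem' := by
    rintro r x ⟨S, hS, hx⟩
    exact ⟨S, hS, (Uf S).smul_mem r hx⟩

theorem uni_flat (Uf Lf : Finset X → Submodule R P) (hU : Monotone Uf) (hL : Monotone Lf)
    (hfl : ∀ S, RFlat (Uf S) (Lf S)) (T : Set X) : RFlat (uni Uf hU T) (uni Lf hL T) := by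
  intro n r x hx hr
  choose S hS hxS using hx
  obtain ⟨S0, hS0, hr0⟩ := hr
  let S1 : Finset X := S0 ∪ Finset.univ.biUnion S
  have hS1 : (S1 : Set X) ⊆ T := by
    intro z hz
    rcases Finset.mem_union.1 (Finset.mem_coe.1 hz) with hz | hz
    · exact hS0 hz
    · obtain ⟨i, -, hz⟩ := Finset.mem_biUnion.1 hz
      exact hS i hz
  obtain ⟨m, a, y, hy, hxy, ha⟩ := hfl S1 n r x
    (fun i => hU ((Finset.subset_biUnion_of_mem S (Finset.mem_univ i)).trans
      Finset.subset_union_right) (hxS i)) (hL Finset.subset_union_left hr0)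
  exact ⟨m, a, y, fun j => ⟨S1, hS1, hy j⟩, fun i => ⟨S1, hS1, hxy i⟩, ha⟩

theorem uni_stage {ι : Type u} [LinearOrder ι] (Uf : Finset X → Submodule R P) (hU : Monotone Uf)
    (e : ι → X) (hm : Monotone fun γ => uni Uf hU (e '' Set.Iic γ))
    (I : Set ι) (hI : IsLowerSet I) (hne : I.Nonempty) :
    stage ⊥ (fun γ => uni Uf hU (e '' Set.Iic γ)) hm (fun _ => bot_le) I = uni Uf hU (e '' I) := by
  ext x
  constructor
  · rintro (hx | ⟨γ, hγ, S, hS, hx⟩)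
    · rw [(Submodule.mem_bot R).1 hx]; exact zero_mem _
    · exact ⟨S, hS.trans (Set.image_mono fun δ hδ => hI hδ hγ), hx⟩
  · rintro ⟨S, hS, hx⟩
    right
    obtain ⟨S', hS', rfl⟩ := Finset.subset_set_image_iff.1 hS
    obtain ⟨γ0, hγ0⟩ := hne
    let T : Finset ι := insert γ0 S'
    have hT : T.Nonempty := Finset.insert_nonempty _ _
    refine ⟨T.max' hT, ?_, S'.image e, ?_, hx⟩
    · rcases Finset.mem_insert.1 (T.max'_mem hT) with h | h
      · rw [h]; exact hγ0
      · exact hS' h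
    · rw [Finset.coe_image]
      exact Set.image_mono fun δ hδ => T.le_max' δ (Finset.mem_insert_of_mem hδ)

theorem stage_empty {ι : Type u} [LinearOrder ι] (Z : ι → Submodule R P) (hZ : Monotone Z)
    (I : Set ι) (hI : ¬ I.Nonempty) : stage ⊥ Z hZ (fun _ => bot_le) I = ⊥ := by
  rw [eq_bot_iff]
  rintro x (hx | ⟨γ, hγ, -⟩)
  · exact hx
  · exact absurd ⟨γ, hγ⟩ hI

theorem bot_flat : RFlat (⊥ : Submodule R P) ⊥ := by
  intro n r x hx _
  exact ⟨0, fun _ => Fin.elim0, Fin.elim0, fun j => j.elim0, fun i => by simpa using hx i,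
    fun j => j.elim0⟩

theorem bot_lift : RLift p (⊥ : Submodule R P) ⊥ := by
  intro f hf
  exact ⟨0, fun _ _ => rfl, fun x => by rw [hf x x.2]; simp⟩

theorem uni_lift (hext : ExtProp R C) (i : M →ₗ[R] C)
    (hi : Function.Injective i) (hexact : Function.Exact i p)
    (Uf Lf : Finset X → Submodule R P) (hU : Monotone Uf) (hL : Monotone Lf)
    (hfl : ∀ S, RFlat (Uf S) (Lf S)) (hli : ∀ S, RLift p (Uf S) (Lf S)) (κ : Cardinal.{u}) :
    ∀ T : Set X, Cardinal.mk T = κ → RLift p (uni Uf hU T) (uni Lf hL T) := by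
  induction κ using WellFoundedLT.induction with
  | ind κ ih =>
  intro T hT
  rcases T.finite_or_infinite with hfin | hinf
  · have key : ∀ (Z : Finset X → Submodule R P) (hZ : Monotone Z), uni Z hZ T = Z hfin.toFinset := by
      intro Z hZ
      ext x
      constructor
      · rintro ⟨S, hS, hx⟩
        exact hZ (fun z hz => hfin.mem_toFinset.2 (hS hz)) hx
      · intro hx
        exact ⟨hfin.toFinset, by simp, hx⟩
    rw [key, key]
    exact hli _
  · have hκ : Cardinal.aleph0 ≤ κ := by
      rw [← hT]; exact Cardinal.infinite_iff.1 hinf.to_subtype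
    let ι := κ.ord.ToType
    have hmk : Cardinal.mk ι = κ := by simp [ι]
    obtain ⟨e⟩ : Nonempty (ι ≃ T) := Cardinal.eq.1 (hmk.trans hT.symm)
    have : Nonempty ι := by
      rw [← Cardinal.mk_ne_zero_iff, hmk]
      exact (Cardinal.aleph0_pos.trans_le hκ).ne'
    let emb : ι → X := fun γ => e γ
    have hmono : ∀ (Z : Finset X → Submodule R P) (hZ : Monotone Z),
        Monotone fun γ => uni Z hZ (emb '' Set.Iic γ) := by
      rintro Z hZ γ γ' hγ x ⟨S, hS, hx⟩
      exact ⟨S, hS.trans (Set.image_mono (Set.Iic_subset_Iic.2 hγ)), hx⟩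
    have hcio : ∀ γ : ι, Cardinal.mk (Set.Iio γ) < κ := fun γ => Cardinal.mk_Iio_toType_ord_lt γ
    have hcic : ∀ γ : ι, Cardinal.mk (Set.Iic γ) < κ := fun γ => by
      rw [← Set.Iio_insert]
      refine (Cardinal.mk_insert_le).trans_lt ?_
      exact Cardinal.add_lt_of_lt hκ (hcio γ) (Cardinal.one_lt_aleph0.trans_le hκ)
    have huniv : emb '' Set.univ = T := by
      ext x
      simp only [emb, Set.image_univ, Set.mem_range]
      constructor
      · rintro ⟨γ, rfl⟩; exact (e γ).2
      · intro hx; exact ⟨e.symm ⟨x, hx⟩, by simp⟩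
    have hc := chain_lift (p := p) hext i hi hexact (fun γ => uni Uf hU (emb '' Set.Iic γ))
      (fun γ => uni Lf hL (emb '' Set.Iic γ)) (hmono Uf hU) (hmono Lf hL)
      (fun γ => ih _ (Cardinal.mk_image_le.trans_lt (hcic γ)) _ rfl)
      (fun γ => by
        by_cases hne : (Set.Iio γ).Nonempty
        · rw [uni_stage Uf hU emb _ _ (isLowerSet_Iio γ) hne,
            uni_stage Lf hL emb _ _ (isLowerSet_Iio γ) hne]
          exact uni_flat Uf Lf hU hL hfl _
        · rw [stage_empty _ _ _ hne, stage_empty _ _ _ hne]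
          exact bot_flat)
      (fun γ => by
        by_cases hne : (Set.Iio γ).Nonempty
        · rw [uni_stage Uf hU emb _ _ (isLowerSet_Iio γ) hne,
            uni_stage Lf hL emb _ _ (isLowerSet_Iio γ) hne]
          exact ih _ (Cardinal.mk_image_le.trans_lt (hcio γ)) _ rfl
        · rw [stage_empty _ _ _ hne, stage_empty _ _ _ hne]
          exact bot_lift)
      (by
        rw [uni_stage Uf hU emb _ _ isLowerSet_univ Set.univ_nonempty,
            uni_stage Lf hL emb _ _ isLowerSet_univ Set.univ_nonempty]
        exact uni_flat Uf Lf hU hL hfl _)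
    rw [uni_stage Uf hU emb _ _ isLowerSet_univ Set.univ_nonempty,
            uni_stage Lf hL emb _ _ isLowerSet_univ Set.univ_nonempty, huniv] at hc
    exact hc

theorem exists_mono {β : Type*} [PartialOrder β] (hd : ∀ s : Finset β, ∃ b, ∀ a ∈ s, a ≤ b)
    (b : X → β) :
    ∃ t : Finset X → β, Monotone t ∧ ∀ S, ∀ x ∈ S, b x ≤ t S := by
  choose ub hub using hd
  let t : Finset X → β := fun S => Finset.strongInduction (p := fun _ => β)
    (fun S ih => ub (S.image b ∪ S.ssubsets.attach.image
      (fun S' => ih S'.1 (Finset.mem_ssubsets.1 S'.2)))) S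
  have ht : ∀ S, t S = ub (S.image b ∪ S.ssubsets.attach.image (fun S' => t S'.1)) := by
    intro S
    exact Finset.strongInduction_eq _ S
  refine ⟨t, ?_, ?_⟩
  · intro S' S hS
    rcases eq_or_ssubset_of_subset hS with rfl | hS
    · exact le_rfl
    · rw [ht S]
      exact hub _ _ (Finset.mem_union_right _ (Finset.mem_image.2
        ⟨⟨S', Finset.mem_ssubsets.2 hS⟩, Finset.mem_attach _ _, rfl⟩))
  · intro S x hx
    rw [ht S]
    exact hub _ _ (Finset.mem_union_left _ (Finset.mem_image_of_mem b hx))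

end

end CotPer

namespace CotPer

section
open Classical
variable {R : Type u} [Ring R] {M C : Type u} [AddCommGroup M] [Module R M] [AddCommGroup C]
  [Module R C] {p : C →ₗ[R] M} {F : Type u} [AddCommGroup F] [Module R F]

theorem multi_fin (hF : Module.IsFlat R F) (n : ℕ) (x : Fin n → F) (s : Finset (Fin n → R))
    (hs : ∀ r ∈ s, ∑ i, r i • x i = 0) :
    ∃ (m : ℕ) (a : Fin n → Fin m → R) (y : Fin m → F),
      (∀ i, x i = ∑ j, a i j • y j) ∧ ∀ r ∈ s, ∀ j, ∑ i, r i * a i j = 0 := by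
  induction s using Finset.induction_on with
  | empty =>
    refine ⟨n, fun i j => if i = j then 1 else 0, x, fun i => ?_, by simp⟩
    simp
  | insert r s _ ih =>
    obtain ⟨m, a, y, hx, ha⟩ := ih fun r hr => hs r (Finset.mem_insert_of_mem hr)
    have hr := hs r (Finset.mem_insert_self _ _)
    have hr' : ∑ j, (∑ i, r i * a i j) • y j = 0 := by
      rw [← hr]
      simp only [Finset.sum_smul]
      rw [Finset.sum_comm]
      refine Finset.sum_congr rfl fun i _ => ?_
      conv_rhs => rw [hx i, Finset.smul_sum]
      simp only [mul_smul]
    obtain ⟨m', b, z, hy, hb⟩ := hF m _ y hr'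
    refine ⟨m', fun i k => ∑ j, a i j * b j k, z, fun i => ?_, fun r' hr'' k => ?_⟩
    · rw [hx i]
      simp only [Finset.sum_smul]
      rw [Finset.sum_comm]
      refine Finset.sum_congr rfl fun j _ => ?_
      conv_lhs => rw [hy j, Finset.smul_sum]
      simp only [mul_smul]
    · have e : ∑ i, r' i * ∑ j, a i j * b j k = ∑ j, (∑ i, r' i * a i j) * b j k := by
        simp only [Finset.mul_sum, Finset.sum_mul, mul_assoc]
        rw [Finset.sum_comm]
      rw [e]
      rcases Finset.mem_insert.1 hr'' with rfl | h
      · exact hb k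
      · simp [ha r' h]

theorem multi {X : Type u} (hF : Module.IsFlat R F) (S : Finset X) (v : X → F)
    (t : Finset (X →₀ R)) (ht : ∀ l ∈ t, ∑ x ∈ S, l x • v x = 0) :
    ∃ (m : ℕ) (a : X → Fin m → R) (y : Fin m → F),
      (∀ x ∈ S, v x = ∑ j, a x j • y j) ∧ ∀ l ∈ t, ∀ j, ∑ x ∈ S, l x * a x j = 0 := by
  let e := S.equivFin
  have hsum : ∀ {A : Type u} [AddCommMonoid A] (h : X → A),
      ∑ k, h (e.symm k) = ∑ x ∈ S, h x := by
    intro A _ h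
    rw [Equiv.sum_comp e.symm (fun x : S => h x), Finset.sum_coe_sort]
  obtain ⟨m, a, y, h1, h2⟩ := multi_fin hF S.card (fun k => v (e.symm k))
    (t.image fun l k => l (e.symm k)) (by
      intro r hr
      obtain ⟨l, hl, rfl⟩ := Finset.mem_image.1 hr
      rw [hsum (fun x => l x • v x)]
      exact ht l hl)
  refine ⟨m, fun x j => if h : x ∈ S then a (e ⟨x, h⟩) j else 0, y, fun x hx => ?_,
    fun l hl j => ?_⟩
  · have := h1 (e ⟨x, hx⟩)
    simpa [hx] using this
  · rw [← hsum (fun x => l x * _)]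
    have := h2 _ (Finset.mem_image_of_mem _ hl) j
    simpa using this

theorem decomp {X : Type u} (S : Finset X) (v : X →₀ R)
    (hv : v ∈ Submodule.span R ((fun x => Finsupp.single x (1 : R)) '' (S : Set X))) :
    v = ∑ x ∈ S, v x • Finsupp.single x (1 : R) := by
  rw [← Finsupp.supported_eq_span_single, Finsupp.mem_supported] at hv
  conv_lhs => rw [← Finsupp.sum_single v]
  rw [Finsupp.sum_of_support_subset v (by exact_mod_cast hv) _ (by simp)]
  simp

theorem abstract_pair {X : Type u} (hp : Function.Surjective p) (S : Finset X)
    (ρ : (X →₀ R) →ₗ[R] (X →₀ R)) (L : Submodule R (X →₀ R)) (hL : L ≤ LinearMap.ker ρ)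
    (hρ : ∀ u, u - ρ u ∈ L) (U : Submodule R (X →₀ R))
    (hUdef : U = Submodule.span R ((fun x => Finsupp.single x (1 : R)) '' (S : Set X)))
    (hU : ∀ u ∈ U, ρ u ∈ U) : RFlat U L ∧ RLift p U L := by
  have hsingle : ∀ x ∈ S, Finsupp.single x (1 : R) ∈ U := fun x hx => by
    rw [hUdef]; exact Submodule.subset_span ⟨x, hx, rfl⟩
  have hdec : ∀ v ∈ U, v = ∑ x ∈ S, v x • Finsupp.single x (1 : R) := fun v hv =>
    decomp S v (by rwa [hUdef] at hv)
  constructor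
  · intro n r x hx hr
    let e := S.equivFin
    refine ⟨S.card, fun i k => ρ (x i) (e.symm k), fun k => Finsupp.single (e.symm k : X) 1,
      fun k => hsingle _ (e.symm k).2, fun i => ?_, fun k => ?_⟩
    · rw [Equiv.sum_comp e.symm (fun z : S => ρ (x i) z • Finsupp.single (z : X) (1 : R)),
        Finset.sum_coe_sort S (fun z => ρ (x i) z • Finsupp.single (z : X) (1 : R)),
        ← hdec _ (hU _ (hx i))]
      exact hρ _
    · have h1 : ρ (∑ i, r i • x i) = 0 := hL hr
      have h2 := DFunLike.congr_fun h1 (e.symm k : X)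
      simpa [Finsupp.finsetSum_apply] using h2
  · intro f hf
    choose q hq using hp
    let g0 : (X →₀ R) →ₗ[R] C := Finsupp.linearCombination R
      (fun x => if h : x ∈ S then q (f ⟨_, hsingle x h⟩) else 0)
    have hg0 : ∀ (u : X →₀ R) (hu : u ∈ U), p (g0 u) = f ⟨u, hu⟩ := by
      intro u hu
      have h1 : (⟨u, hu⟩ : U) = ∑ x ∈ S.attach, u x • ⟨_, hsingle x.1 x.2⟩ := by
        apply Subtype.ext
        have := hdec u hu
        rw [← Finset.sum_attach] at this
        simpa using this
      rw [h1, map_sum]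
      conv_lhs => rw [hdec u hu, ← Finset.sum_attach, map_sum, map_sum]
      refine Finset.sum_congr rfl fun x _ => ?_
      rw [map_smul, map_smul, map_smul]
      congr 1
      simp only [g0, Finsupp.linearCombination_single, one_smul, dif_pos x.2, hq]
    refine ⟨g0 ∘ₗ ρ ∘ₗ U.subtype, fun x hx => ?_, fun x => ?_⟩
    · have : ρ x = 0 := hL hx
      simp [this]
    · have h1 := hf (x - ⟨ρ x, hU _ x.2⟩) (hρ x)
      have h2 := (LinearMap.map_sub f x ⟨ρ x, hU _ x.2⟩).symm.trans h1
      rw [sub_eq_zero.1 h2]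
      exact hg0 _ _

theorem basic (hF : Module.IsFlat R F) (hp : Function.Surjective p)
    (U0 L0 : Submodule R ((F × ℕ) →₀ R)) (hU0 : U0.FG) (hL0 : L0.FG)
    (hLK : L0 ≤ LinearMap.ker (Finsupp.linearCombination R (Prod.fst : F × ℕ → F))) :
    ∃ U L : Submodule R ((F × ℕ) →₀ R), U0 ≤ U ∧ L0 ≤ L ∧ U.FG ∧ L.FG ∧
      L ≤ LinearMap.ker (Finsupp.linearCombination R (Prod.fst : F × ℕ → F)) ∧
      RFlat U L ∧ RLift p U L := by
  obtain ⟨tU, rfl⟩ := hU0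
  obtain ⟨tL, rfl⟩ := hL0
  let S : Finset (F × ℕ) := tU.biUnion Finsupp.support ∪ tL.biUnion Finsupp.support
  have hSL : ∀ l ∈ tL, l.support ⊆ S := fun l hl =>
    (Finset.subset_biUnion_of_mem Finsupp.support hl).trans Finset.subset_union_right
  have hSU : ∀ l ∈ tU, l.support ⊆ S := fun l hl =>
    (Finset.subset_biUnion_of_mem Finsupp.support hl).trans Finset.subset_union_left
  obtain ⟨m, a, y, h1, h2⟩ := multi hF S Prod.fst tL (by
    intro l hl
    have : Finsupp.linearCombination R (Prod.fst : F × ℕ → F) l = 0 :=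
      hLK (Submodule.subset_span hl)
    rw [← this, Finsupp.linearCombination_apply,
      Finsupp.sum_of_support_subset l (hSL l hl) _ (by simp)])
  let N : ℕ := S.sup Prod.snd + 1
  have hN : ∀ j, (y j, N) ∉ S := fun j hj => by
    have := Finset.le_sup (f := Prod.snd) hj
    simp only [N] at this
    omega
  let w : F × ℕ → ((F × ℕ) →₀ R) := fun x => ∑ j, a x j • Finsupp.single (y j, N) (1 : R)
  let ρ : ((F × ℕ) →₀ R) →ₗ[R] ((F × ℕ) →₀ R) := Finsupp.linearCombination R
    (fun x => if x ∈ S then w x else Finsupp.single x 1)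
  have hρ1 : ∀ x ∈ S, ρ (Finsupp.single x 1) = w x := fun x hx => by
    simp [ρ, hx]
  have hρ2 : ∀ x ∉ S, ρ (Finsupp.single x 1) = Finsupp.single x 1 := fun x hx => by
    simp [ρ, hx]
  have hρw : ∀ x, ρ (w x) = w x := fun x => by
    simp only [w, map_sum, map_smul]
    exact Finset.sum_congr rfl fun j _ => by rw [hρ2 _ (hN j)]
  let L : Submodule R ((F × ℕ) →₀ R) :=
    Submodule.span R ((fun x => Finsupp.single x (1 : R) - w x) '' (S : Set (F × ℕ)))
  let S1 : Finset (F × ℕ) := S ∪ Finset.univ.image fun j => (y j, N)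
  let U : Submodule R ((F × ℕ) →₀ R) :=
    Submodule.span R ((fun x => Finsupp.single x (1 : R)) '' (S1 : Set (F × ℕ)))
  have hLρ : L ≤ LinearMap.ker ρ := by
    rw [Submodule.span_le]
    rintro _ ⟨x, hx, rfl⟩
    change ρ (_ - _) = 0
    rw [map_sub, hρ1 x hx, hρw, sub_self]
  have hLρ' : ∀ u, u - ρ u ∈ L := by
    intro u
    induction u using Finsupp.induction_linear with
    | zero => simp
    | add u v hu hv =>
      have : u + v - ρ (u + v) = (u - ρ u) + (v - ρ v) := by rw [map_add]; abel
      rw [this]; exact add_mem hu hv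
    | single x c =>
      have : Finsupp.single x c = c • Finsupp.single x (1 : R) := by simp
      rw [this, map_smul, ← smul_sub]
      refine L.smul_mem _ ?_
      by_cases hx : x ∈ S
      · rw [hρ1 x hx]; exact Submodule.subset_span ⟨x, hx, rfl⟩
      · rw [hρ2 x hx, sub_self]; exact zero_mem _
  have hwU : ∀ x, w x ∈ U := fun x => Submodule.sum_mem _ fun j _ => U.smul_mem _
    (Submodule.subset_span ⟨_, Finset.mem_union_right _
      (Finset.mem_image_of_mem _ (Finset.mem_univ j)), rfl⟩)
  have hρU : ∀ u ∈ U, ρ u ∈ U := by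
    intro u hu
    have : U ≤ U.comap ρ := by
      rw [Submodule.span_le]
      rintro _ ⟨x, hx, rfl⟩
      change ρ _ ∈ U
      by_cases hxS : x ∈ S
      · rw [hρ1 x hxS]; exact hwU x
      · rw [hρ2 x hxS]; exact Submodule.subset_span ⟨x, hx, rfl⟩
    exact this hu
  obtain ⟨hA, hB⟩ := abstract_pair (p := p) hp S1 ρ L hLρ hLρ' U rfl hρU
  refine ⟨U, L, ?_, ?_, ?_, ?_, ?_, hA, hB⟩
  · rw [Submodule.span_le]
    intro l hl
    change l ∈ Submodule.span R ((fun x => Finsupp.single x (1 : R)) '' (S1 : Set (F × ℕ)))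
    rw [← Finsupp.supported_eq_span_single, Finsupp.mem_supported]
    exact_mod_cast (hSU l hl).trans Finset.subset_union_left
  · rw [Submodule.span_le]
    intro l hl
    have hz : ρ l = 0 := by
      have hl' : l = ∑ x ∈ S, l x • Finsupp.single x (1 : R) := decomp S l (by
        rw [← Finsupp.supported_eq_span_single, Finsupp.mem_supported]
        exact_mod_cast hSL l hl)
      rw [hl', map_sum]
      have : ∀ x ∈ S, ρ (l x • Finsupp.single x (1 : R)) =
          ∑ j, (l x * a x j) • Finsupp.single (y j, N) (1 : R) := by
        intro x hx
        rw [map_smul, hρ1 x hx]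
        simp only [w, Finset.smul_sum, mul_smul]
      rw [Finset.sum_congr rfl this, Finset.sum_comm]
      refine Finset.sum_eq_zero fun j _ => ?_
      rw [← Finset.sum_smul, h2 l hl j, zero_smul]
    have := hLρ' l
    rwa [hz, sub_zero] at this
  · exact Submodule.fg_span (S1.finite_toSet.image _)
  · exact Submodule.fg_span (S.finite_toSet.image _)
  · rw [Submodule.span_le]
    rintro _ ⟨x, hx, rfl⟩
    change Finsupp.linearCombination R (Prod.fst : F × ℕ → F) (_ - _) = 0
    rw [map_sub, Finsupp.linearCombination_single, one_smul, h1 x hx, sub_eq_zero]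
    simp only [w, map_sum, map_smul, Finsupp.linearCombination_single, one_smul]

theorem flat_lift (hext : ExtProp R C) (i : M →ₗ[R] C)
    (hi : Function.Injective i) (hexact : Function.Exact i p) (hp : Function.Surjective p)
    (hF : Module.IsFlat R F) (f : F →ₗ[R] M) : ∃ g : F →ₗ[R] C, ∀ x, p (g x) = f x := by
  let π : ((F × ℕ) →₀ R) →ₗ[R] F := Finsupp.linearCombination R (Prod.fst : F × ℕ → F)
  let P := (F × ℕ) →₀ R
  let β := {q : Submodule R P × Submodule R P // q.1.FG ∧ q.2.FG ∧ q.2 ≤ LinearMap.ker π ∧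
    RFlat q.1 q.2 ∧ RLift p q.1 q.2}
  have hd : ∀ s : Finset β, ∃ b, ∀ a ∈ s, a ≤ b := by
    intro s
    obtain ⟨U, L, h1, h2, h3, h4, h5, h6, h7⟩ := basic (p := p) hF hp
      (s.sup fun q => q.1.1) (s.sup fun q => q.1.2)
      (Submodule.fg_finset_sup _ _ fun q _ => q.2.1)
      (Submodule.fg_finset_sup _ _ fun q _ => q.2.2.1)
      (Finset.sup_le fun q _ => q.2.2.2.1)
    exact ⟨⟨⟨U, L⟩, h3, h4, h5, h6, h7⟩, fun q hq =>
      ⟨(Finset.le_sup (f := fun q : β => q.1.1) hq).trans h1,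
        (Finset.le_sup (f := fun q : β => q.1.2) hq).trans h2⟩⟩
  have hb : ∀ x : P, ∃ b : β, x ∈ b.1.1 ∧ (x ∈ LinearMap.ker π → x ∈ b.1.2) := by
    intro x
    obtain ⟨U, L, h1, h2, h3, h4, h5, h6, h7⟩ := basic (p := p) hF hp
      (Submodule.span R {x}) (if x ∈ LinearMap.ker π then Submodule.span R {x} else ⊥)
      (Submodule.fg_span_singleton x)
      (by split_ifs; exacts [Submodule.fg_span_singleton x, Submodule.fg_bot])
      (by
        split_ifs with h
        · rw [Submodule.span_singleton_le_iff_mem]; exact h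
        · exact bot_le)
    refine ⟨⟨⟨U, L⟩, h3, h4, h5, h6, h7⟩, h1 (Submodule.mem_span_singleton_self x), fun hx => ?_⟩
    rw [if_pos hx] at h2
    exact h2 (Submodule.mem_span_singleton_self x)
  choose b hb1 hb2 using hb
  obtain ⟨t, ht, hbt⟩ := exists_mono hd b
  have hU : Monotone fun S => (t S).1.1 := fun S S' h => (ht h).1
  have hL : Monotone fun S => (t S).1.2 := fun S S' h => (ht h).2
  have key := uni_lift (p := p) hext i hi hexact (fun S => (t S).1.1) (fun S => (t S).1.2) hU hL
    (fun S => (t S).2.2.2.2.1) (fun S => (t S).2.2.2.2.2) _ Set.univ rfl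
  have e1 : uni (fun S => (t S).1.1) hU Set.univ = ⊤ := by
    rw [eq_top_iff]
    intro x _
    exact ⟨{x}, Set.subset_univ _, (hbt {x} x (Finset.mem_singleton_self x)).1 (hb1 x)⟩
  have e2 : uni (fun S => (t S).1.2) hL Set.univ = LinearMap.ker π := by
    apply le_antisymm
    · rintro x ⟨S, -, hx⟩
      exact (t S).2.2.2.1 hx
    · intro x hx
      exact ⟨{x}, Set.subset_univ _, (hbt {x} x (Finset.mem_singleton_self x)).2 (hb2 x hx)⟩
  rw [e1, e2] at key
  obtain ⟨g, hg1, hg2⟩ := key ((f ∘ₗ π) ∘ₗ Submodule.subtype ⊤) (fun x hx => by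
    have : π x = 0 := hx
    simp [this])
  have hπ : Function.Surjective π := fun x => ⟨Finsupp.single (x, 0) 1, by simp [π]⟩
  obtain ⟨g', hg'⟩ := factor π hπ (g ∘ₗ Submodule.topEquiv.symm.toLinearMap)
    (fun x hx => hg1 _ hx)
  refine ⟨g', fun x => ?_⟩
  obtain ⟨z, rfl⟩ := hπ x
  rw [hg']
  exact hg2 _

end

end CotPer

/-- **Cotorsion periodicity** (Bazzoni–Cortés-Izurdiaga–Estrada).  If
`0 → M → C → M → 0` is a short exact sequence of left `R`-modules and `C` is cotorsion,
then `M` is cotorsion. -/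
theorem cotorsion_periodicity
    {R : Type u} [Ring R] (M C : ModuleCat.{u} R)
    (i : M ⟶ C) (p : C ⟶ M)
    (hi : Function.Injective i) (hp : Function.Surjective p)
    (hexact : Function.Exact i p)
    (hC : C.IsCotorsion) :
    M.IsCotorsion := by
  intro F hF
  have hp' : Function.Surjective p.hom := hp
  exact CotPer.final_step M C i.hom p.hom hi hexact F (hC F hF)
    (CotPer.flat_lift (CotPer.extProp_of_cotorsion C hC) i.hom hi hexact hp' hF)
end

section
/- Let R be an associative unital ring. Then every left R-module M can be included into a short exact sequence 0 → M → C → G → 0 of left R-modules in which C is cotorsion and G is flat. -/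
universe u

open CategoryTheory

namespace CotorsionPre

section Flat

variable {R : Type*} [Ring R]

/-- Flatness of a quotient, phrased upstairs. -/
lemma isFlat_quot_iff {B : Type*} [AddCommGroup B] [Module R B] (A : Submodule R B) :
    Module.IsFlat R (B ⧸ A) ↔ ∀ (n : ℕ) (r : Fin n → R) (b : Fin n → B), ∑ i, r i • b i ∈ A →
      ∃ (m : ℕ) (a : Fin n → Fin m → R) (y : Fin m → B),
        (∀ i, b i - ∑ j, a i j • y j ∈ A) ∧ ∀ j, ∑ i, r i * a i j = 0 := by
  constructor
  · intro h n r b hb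
    obtain ⟨m, a, y, h1, h2⟩ := h n r (fun i => A.mkQ (b i)) (by
      have : A.mkQ (∑ i, r i • b i) = 0 := by
        rw [Submodule.mkQ_apply, Submodule.Quotient.mk_eq_zero]; exact hb
      simpa only [map_sum, map_smul] using this)
    choose y' hy' using fun j => A.mkQ_surjective (y j)
    refine ⟨m, a, y', fun i => ?_, h2⟩
    rw [← Submodule.Quotient.mk_eq_zero, ← Submodule.mkQ_apply, map_sub, h1 i, map_sum]
    simp only [map_smul, hy', sub_self]
  · intro h n r x hx
    choose b hb using fun j => A.mkQ_surjective (x j)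
    obtain ⟨m, a, y, h1, h2⟩ := h n r b (by
      rw [← Submodule.Quotient.mk_eq_zero, ← Submodule.mkQ_apply, map_sum]
      simpa only [map_smul, hb] using hx)
    refine ⟨m, a, fun j => A.mkQ (y j), fun i => ?_, h2⟩
    have := h1 i
    rw [← Submodule.Quotient.mk_eq_zero, ← Submodule.mkQ_apply, map_sub, map_sum, hb,
      sub_eq_zero] at this
    simpa only [map_smul] using this

lemma isFlat_of_equiv {M N : Type*} [AddCommGroup M] [Module R M] [AddCommGroup N] [Module R N]
    (e : M ≃ₗ[R] N) (h : Module.IsFlat R M) : Module.IsFlat R N := by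
  intro n r x hx
  obtain ⟨m, a, y, h1, h2⟩ := h n r (fun i => e.symm (x i)) (by
    have := congrArg e.symm hx
    simpa only [map_sum, map_smul, map_zero] using this)
  refine ⟨m, a, fun j => e (y j), fun i => ?_, h2⟩
  have := congrArg e (h1 i)
  simpa only [map_sum, map_smul, LinearEquiv.apply_symm_apply] using this

lemma isFlat_finsupp (X : Type*) : Module.IsFlat R (X →₀ R) := by
  classical
  intro n r p hp
  let s : Finset X := Finset.univ.biUnion fun i => (p i).support
  let e := s.equivFin
  refine ⟨s.card, fun i j => p i (e.symm j), fun j => Finsupp.single (e.symm j : X) 1, ?_, ?_⟩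
  · intro i
    rw [e.symm.sum_comp (fun x : s => p i x • Finsupp.single (x : X) (1 : R)),
      Finset.sum_coe_sort s (fun x => p i x • Finsupp.single (x : X) (1 : R))]
    conv_lhs => rw [← Finsupp.sum_single (p i)]
    rw [Finsupp.sum_of_support_subset (s := s)]
    · simp
    · exact Finset.subset_biUnion_of_mem (fun i => (p i).support) (Finset.mem_univ i)
    · simp
  · intro j
    have := DFunLike.congr_fun hp (e.symm j : X)
    simpa [Finsupp.finsetSum_apply] using this

/-- Purity of `A` in `B` when `B ⧸ A` is flat. -/
lemma pure_of_isFlat {B : Type*} [AddCommGroup B] [Module R B] (A : Submodule R B)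
    (h : Module.IsFlat R (B ⧸ A)) {n : ℕ} (r : Fin n → R) (b : Fin n → B)
    (hb : ∑ i, r i • b i ∈ A) :
    ∃ a : Fin n → A, ∑ i, r i • (a i : B) = ∑ i, r i • b i := by
  obtain ⟨m, a, y, h1, h2⟩ := (isFlat_quot_iff A).1 h n r b hb
  refine ⟨fun i => ⟨_, h1 i⟩, ?_⟩
  simp only [smul_sub, Finset.sum_sub_distrib, Finset.smul_sum, smul_smul]
  rw [Finset.sum_comm]
  simp only [← Finset.sum_smul, h2, zero_smul, Finset.sum_const_zero, sub_zero]

end Flat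

/-! ### Small pure submodules -/

/-- Terms describing the elements of the pure submodule generated by one element. -/
inductive Tm (R : Type u) : Type u
  | gen : Tm R
  | add : Tm R → Tm R → Tm R
  | smul : R → Tm R → Tm R
  | opA (n : ℕ) : (Fin n → R) → (Fin n → Tm R) → ℕ → Tm R
  | opB (n : ℕ) : (Fin n → R) → Tm R → Fin n → Tm R

section Small

variable {R : Type u} [Ring R] {F : Type*} [AddCommGroup F] [Module R F]

/-- The chosen `y`. -/
noncomputable def yA (hF : Module.IsFlat R F) (n : ℕ) (r : Fin n → R) (x : Fin n → F) (j : ℕ) :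
    F := by
  classical
  exact if h : ∑ i, r i • x i = 0 then
    if hj : j < (hF n r x h).choose then
      (hF n r x h).choose_spec.choose_spec.choose ⟨j, hj⟩ else 0
    else 0

lemma yA_spec (hF : Module.IsFlat R F) (n : ℕ) (r : Fin n → R) (x : Fin n → F)
    (h : ∑ i, r i • x i = 0) : ∃ (m : ℕ) (a : Fin n → Fin m → R),
      (∀ i, x i = ∑ j : Fin m, a i j • yA hF n r x j) ∧ ∀ j, ∑ i, r i * a i j = 0 := by
  refine ⟨(hF n r x h).choose, (hF n r x h).choose_spec.choose, ?_, ?_⟩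
  · intro i
    refine ((hF n r x h).choose_spec.choose_spec.choose_spec.1 i).trans ?_
    refine Finset.sum_congr rfl fun j _ => ?_
    simp only [yA, dif_pos h, dif_pos j.2]
  · exact (hF n r x h).choose_spec.choose_spec.choose_spec.2

/-- The chosen solution of an inhomogeneous equation. -/
noncomputable def xB (n : ℕ) (r : Fin n → R) (s : F) : Fin n → F := by
  classical
  exact if h : ∃ x : Fin n → F, ∑ i, r i • x i = s then h.choose else 0

lemma xB_spec (n : ℕ) (r : Fin n → R) (x : Fin n → F) :
    ∑ i, r i • xB n r (∑ i, r i • x i) i = ∑ i, r i • x i := by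
  have h : ∃ x' : Fin n → F, ∑ i, r i • x' i = ∑ i, r i • x i := ⟨x, rfl⟩
  simp only [xB, dif_pos h]
  exact h.choose_spec

/-- Evaluation of terms. -/
noncomputable def ev (hF : Module.IsFlat R F) (x : F) : Tm R → F
  | .gen => x
  | .add s t => ev hF x s + ev hF x t
  | .smul r t => r • ev hF x t
  | .opA n r t j => yA hF n r (fun i => ev hF x (t i)) j
  | .opB n r t i => xB n r (ev hF x t) i

lemma exists_small (hF : Module.IsFlat R F) (x : F) :
    ∃ (S : Submodule R F) (e : Tm R → F), Set.range e = S ∧ x ∈ S ∧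
      Module.IsFlat R S ∧ Module.IsFlat R (F ⧸ S) := by
  let S : Submodule R F :=
    { carrier := Set.range (ev hF x)
      add_mem' := by
        rintro _ _ ⟨s, rfl⟩ ⟨t, rfl⟩
        exact ⟨.add s t, by simp only [ev]⟩
      zero_mem' := ⟨.smul 0 .gen, by simp only [ev, zero_smul]⟩
      smul_mem' := by
        rintro r _ ⟨s, rfl⟩
        exact ⟨.smul r s, by simp only [ev]⟩ }
  refine ⟨S, ev hF x, rfl, ⟨.gen, by simp only [ev]⟩, ?_, ?_⟩
  · intro n r s hs
    choose t ht using fun i => (s i).2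
    obtain ⟨m, a, h1, h2⟩ := yA_spec hF n r (fun i => ev hF x (t i)) (by
      have := congrArg S.subtype hs
      simpa [ht] using this)
    refine ⟨m, a, fun j => ⟨_, ⟨.opA n r t j, rfl⟩⟩, fun i => Subtype.ext ?_, h2⟩
    rw [← ht, h1 i]
    simp [ev]
  · rw [isFlat_quot_iff]
    intro n r b hb
    obtain ⟨t, ht⟩ := id hb
    have h0 : ∑ i, r i • (b i - xB n r (∑ i, r i • b i) i) = 0 := by
      simp only [smul_sub, Finset.sum_sub_distrib, xB_spec, sub_self]
    obtain ⟨m, a, y, h1, h2⟩ := hF n r _ h0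
    refine ⟨m, a, y, fun i => ?_, h2⟩
    rw [← h1 i, sub_sub_cancel, ← ht]
    exact ⟨.opB n r t i, by simp only [ev]⟩

end Small

/-! ### Character modules -/

section Dual

variable (R : Type u) [Ring R]

/-- The character group of `R`, as a left `R`-module. -/
def DE : Type u := R →+ AddCircle (1 : ℚ)

instance : AddCommGroup (DE R) := inferInstanceAs (AddCommGroup (R →+ AddCircle (1 : ℚ)))

variable {R}

/-- Evaluation. -/
def DE.app (φ : DE R) : R →+ AddCircle (1 : ℚ) := φ

lemma DE.ext' {φ ψ : DE R} (h : ∀ s, φ.app s = ψ.app s) : φ = ψ := AddMonoidHom.ext h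

instance : SMul R (DE R) := ⟨fun a φ => (φ.app.comp (AddMonoidHom.mulRight a) : R →+ _)⟩

@[simp] lemma DE.add_app (φ ψ : DE R) (s : R) : (φ + ψ).app s = φ.app s + ψ.app s := rfl
@[simp] lemma DE.zero_app (s : R) : (0 : DE R).app s = 0 := rfl
@[simp] lemma DE.smul_app (a : R) (φ : DE R) (s : R) : (a • φ).app s = φ.app (s * a) := rfl

instance : Module R (DE R) where
  one_smul φ := DE.ext' fun s => by simp
  mul_smul a b φ := DE.ext' fun s => by simp [mul_assoc]
  smul_zero a := DE.ext' fun s => by simp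
  smul_add a φ ψ := DE.ext' fun s => by simp
  add_smul a b φ := DE.ext' fun s => by simp [mul_add]
  zero_smul φ := DE.ext' fun s => by simp

/-- The submodule of characters vanishing on the right ideal generated by `r`. -/
def DS {n : ℕ} (r : Fin n → R) : Submodule R (DE R) where
  carrier := {φ | ∀ i s, φ.app (r i * s) = 0}
  add_mem' := by
    intro φ ψ h1 h2 i s
    simp [h1 i s, h2 i s]
  zero_mem' := by
    intro i s
    simp
  smul_mem' := by
    intro a φ h i s
    simp [mul_assoc, h i]

lemma mem_DS {n : ℕ} (r : Fin n → R) (φ : DE R) : φ ∈ DS r ↔ ∀ i s, φ.app (r i * s) = 0 :=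
  Iff.rfl

/-- The linear map to `DE R` attached to a character. -/
def toDE {A : Type*} [AddCommGroup A] [Module R A] (χ : A →+ AddCircle (1 : ℚ)) : A →ₗ[R] DE R where
  toFun a := (χ.comp ((AddMonoidHom.flip (smulAddHom R A)) a) : R →+ _)
  map_add' a b := DE.ext' fun s => by
    change χ (s • (a + b)) = χ (s • a) + χ (s • b)
    simp
  map_smul' c a := DE.ext' fun s => by
    change χ (s • c • a) = χ ((s * c) • a)
    simp [mul_smul]

lemma toDE_app {A : Type*} [AddCommGroup A] [Module R A] (χ : A →+ AddCircle (1 : ℚ)) (a : A)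
    (s : R) : (toDE (R := R) χ a).app s = χ (s • a) := rfl

lemma circle_extend {A X : Type*} [AddCommGroup A] [AddCommGroup X] (α : A →+ X)
    (χ : A →+ AddCircle (1 : ℚ)) (h : ∀ a, α a = 0 → χ a = 0) :
    ∃ χ' : X →+ AddCircle (1 : ℚ), ∀ a, χ' (α a) = χ a := by
  obtain ⟨g, hg⟩ := (Module.Baer.of_divisible (AddCircle (1 : ℚ))).extension_property_addMonoidHom
    (QuotientAddGroup.kerLift α) (QuotientAddGroup.kerLift_injective α)
    (QuotientAddGroup.lift α.ker χ fun a ha => h a ha)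
  exact ⟨g, fun a => DFunLike.congr_fun hg (a : A ⧸ α.ker)⟩

/-- Extension property of `DS r`. -/
lemma DS_extend {n : ℕ} (r : Fin n → R) {B : Type*} [AddCommGroup B] [Module R B]
    (A : Submodule R B)
    (hp : ∀ b : Fin n → B, ∑ i, r i • b i ∈ A →
      ∃ a : Fin n → A, ∑ i, r i • (a i : B) = ∑ i, r i • b i)
    (f : A →ₗ[R] DE R) (hf : ∀ a, f a ∈ DS r) :
    ∃ g : B →ₗ[R] DE R, (∀ b, g b ∈ DS r) ∧ ∀ a : A, g a = f a := by
  let ρ : (Fin n → B) →+ B :=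
    { toFun := fun b => ∑ i, r i • b i
      map_zero' := by simp
      map_add' := by intro b c; simp [Finset.sum_add_distrib] }
  let χ : A →+ AddCircle (1 : ℚ) :=
    { toFun := fun a => (f a).app 1
      map_zero' := by simp
      map_add' := by intro b c; simp }
  obtain ⟨χ', hχ'⟩ := circle_extend
    ((QuotientAddGroup.mk' ρ.range).comp A.subtype.toAddMonoidHom) χ (by
      intro a ha
      have ha' : (a : B) ∈ ρ.range := (QuotientAddGroup.eq_zero_iff _).1 ha
      obtain ⟨b, hb⟩ := ha'
      change ∑ i, r i • b i = (a : B) at hb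
      obtain ⟨c, hc⟩ := hp b (hb ▸ a.2)
      have hac : a = ∑ i, r i • c i := Subtype.ext (by
        rw [← hb, ← hc]; simp)
      rw [hac, map_sum]
      refine Finset.sum_eq_zero fun i _ => ?_
      change (f (r i • c i)).app 1 = 0
      rw [map_smul, DE.smul_app, one_mul]
      simpa using hf (c i) i 1)
  refine ⟨toDE (χ'.comp (QuotientAddGroup.mk' ρ.range)), ?_, ?_⟩
  · intro b i s
    rw [toDE_app]
    have : QuotientAddGroup.mk' ρ.range ((r i * s) • b) = 0 := by
      refine (QuotientAddGroup.eq_zero_iff _).2 ⟨Pi.single i (s • b), ?_⟩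
      change ∑ j, r j • (Pi.single i (s • b) : Fin n → B) j = _
      rw [Finset.sum_eq_single i]
      · simp [mul_smul]
      · intro j _ hj
        simp [hj]
      · simp
    rw [AddMonoidHom.comp_apply, this, map_zero]
  · intro a
    refine DE.ext' fun s => ?_
    rw [toDE_app]
    refine (hχ' (s • a)).trans ?_
    change (f (s • a)).app 1 = _
    rw [map_smul, DE.smul_app, one_mul]

/-- `DE R` is injective. -/
lemma DE_extend {B : Type*} [AddCommGroup B] [Module R B]
    (A : Submodule R B) (f : A →ₗ[R] DE R) :
    ∃ g : B →ₗ[R] DE R, ∀ a : A, g a = f a := by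
  obtain ⟨g, -, hg⟩ := DS_extend (n := 0) (Fin.elim0) A
    (fun b _ => ⟨fun i => i.elim0, by simp⟩) f (fun a i => i.elim0)
  exact ⟨g, hg⟩

/-- Flatness criterion: if maps to `DS r` extend from `K` to a free module, the quotient is flat. -/
lemma isFlat_of_extend (X : Type*) (K : Submodule R (X →₀ R))
    (h : ∀ (n : ℕ) (r : Fin n → R) (f : K →ₗ[R] DE R), (∀ a, f a ∈ DS r) →
      ∃ g : (X →₀ R) →ₗ[R] DE R, (∀ b, g b ∈ DS r) ∧ ∀ a : K, g a = f a) :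
    Module.IsFlat R ((X →₀ R) ⧸ K) := by
  rw [isFlat_quot_iff]
  intro n r b hb
  let ρ : (Fin n → K) →+ K :=
    { toFun := fun b => ∑ i, r i • b i
      map_zero' := by simp
      map_add' := by intro b c; simp [Finset.sum_add_distrib] }
  let N : AddSubgroup K := AddMonoidHom.range (G := Fin n → K) ρ
  have key : (⟨_, hb⟩ : K) ∈ N := by
    by_contra hk
    have hk' : (QuotientAddGroup.mk' N) ⟨_, hb⟩ ≠ 0 :=
      fun h0 => hk ((QuotientAddGroup.eq_zero_iff _).1 h0)
    obtain ⟨c, hc⟩ := CharacterModule.exists_character_apply_ne_zero_of_ne_zero hk'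
    let c' := (show _ →+ AddCircle (1 : ℚ) from c)
    obtain ⟨g, hg1, hg2⟩ := h n r (toDE (c'.comp (QuotientAddGroup.mk' N))) (by
      intro b i s
      rw [toDE_app]
      have : QuotientAddGroup.mk' N ((r i * s) • b) = 0 := by
        refine (QuotientAddGroup.eq_zero_iff _).2 ⟨Pi.single i (s • b), ?_⟩
        change ∑ j, r j • (Pi.single i (s • b) : Fin n → K) j = _
        rw [Finset.sum_eq_single i]
        · simp [mul_smul]
        · intro j _ hj
          simp [hj]
        · simp
      rw [AddMonoidHom.comp_apply, this, map_zero])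
    apply hc
    have h1 := congrArg (fun φ : DE R => φ.app 1) (hg2 ⟨_, hb⟩)
    simp only [toDE_app, one_smul] at h1
    refine Eq.trans h1.symm ?_
    have h2 : ∀ s : Finset (Fin n), (g (∑ i ∈ s, r i • b i)).app 1 = 0 := by
      classical
      intro s
      induction s using Finset.induction_on with
      | empty => simp
      | insert i s hi ih =>
        rw [Finset.sum_insert hi, map_add, DE.add_app, ih, map_smul, DE.smul_app, one_mul]
        simpa using hg1 (b i) i 1
    exact h2 _
  obtain ⟨k, hk⟩ := key
  have hk' : ∑ i, r i • (k i : X →₀ R) = ∑ i, r i • b i := by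
    have := congrArg K.subtype hk
    simpa [ρ] using this
  obtain ⟨m, a, y, h1, h2⟩ := isFlat_finsupp (R := R) X n r (fun i => b i - (k i : X →₀ R)) (by
    simp only [smul_sub, Finset.sum_sub_distrib, hk', sub_self])
  refine ⟨m, a, y, fun i => ?_, h2⟩
  rw [← h1 i, sub_sub_cancel]
  exact (k i).2

end Dual

/-! ### Extension along inclusions with flat quotient -/

section Zorn

variable {R : Type u} [Ring R]

/-- Extension property with respect to the small generating family. -/
def SmallExt (C : Type*) [AddCommGroup C] [Module R C] : Prop :=
  ∀ K : Submodule R (Tm R →₀ R), Module.IsFlat R ((Tm R →₀ R) ⧸ K) →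
    ∀ f : K →ₗ[R] C, ∃ g : (Tm R →₀ R) →ₗ[R] C, ∀ k : K, g k = f k

variable {C : Type*} [AddCommGroup C] [Module R C]

lemma exists_larger (hC : SmallExt (R := R) C) {B : Type*} [AddCommGroup B] [Module R B]
    (f : B →ₗ.[R] C) (hf : Module.IsFlat R (B ⧸ f.domain)) (x : B) :
    ∃ f' : B →ₗ.[R] C, f ≤ f' ∧ Module.IsFlat R (B ⧸ f'.domain) ∧ x ∈ f'.domain := by
  obtain ⟨S, e, he, hx, hS, hS'⟩ := exists_small hf (f.domain.mkQ x)
  choose l hl using fun t => f.domain.mkQ_surjective (e t)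
  let φ : (Tm R →₀ R) →ₗ[R] B := Finsupp.linearCombination R l
  have hrange : LinearMap.range (f.domain.mkQ ∘ₗ φ) = S := by
    have h1 : f.domain.mkQ ∘ₗ φ = Finsupp.linearCombination R e := by
      ext t
      simp only [φ, LinearMap.comp_apply, Finsupp.lsingle_apply,
        Finsupp.linearCombination_single, one_smul, hl]
    rw [h1, Finsupp.range_linearCombination, he, Submodule.span_eq]
  have hker : ∀ p, p ∈ LinearMap.ker (f.domain.mkQ ∘ₗ φ) ↔ φ p ∈ f.domain := by
    intro p
    rw [LinearMap.mem_ker, LinearMap.comp_apply, Submodule.mkQ_apply,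
      Submodule.Quotient.mk_eq_zero]
  have hK : Module.IsFlat R ((Tm R →₀ R) ⧸ LinearMap.ker (f.domain.mkQ ∘ₗ φ)) :=
    isFlat_of_equiv (LinearMap.quotKerEquivRange _).symm (hrange ▸ hS)
  obtain ⟨g, hg⟩ := hC _ hK
    (f.toFun ∘ₗ (φ.restrict (fun p hp => (hker p).1 hp)))
  let Γ : Submodule R (B × C) := f.graph ⊔ LinearMap.range (φ.prod g)
  have hΓmem : ∀ z : B × C, z ∈ Γ ↔ ∃ (a : f.domain) (p : Tm R →₀ R),
      z = (a + φ p, f a + g p) := by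
    intro z
    rw [Submodule.mem_sup]
    constructor
    · rintro ⟨u, hu, _, ⟨p, rfl⟩, rfl⟩
      obtain ⟨a, ha1, ha2⟩ := (LinearPMap.mem_graph_iff f).1 hu
      exact ⟨a, p, Prod.ext (by simp [ha1]) (by simp [ha2])⟩
    · rintro ⟨a, p, rfl⟩
      exact ⟨(a, f a), LinearPMap.mem_graph f a, _, ⟨p, rfl⟩, by simp⟩
  have hΓ : ∀ z ∈ Γ, z.1 = 0 → z.2 = 0 := by
    intro z hz hz0
    obtain ⟨a, p, rfl⟩ := (hΓmem z).1 hz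
    have h1 : φ p = ((-a : f.domain) : B) := by
      simpa using (eq_neg_of_add_eq_zero_right hz0)
    have hp : φ p ∈ f.domain := h1 ▸ (-a).2
    have h2 := hg ⟨p, (hker p).2 hp⟩
    have h3 : f.toFun ⟨φ p, hp⟩ = f.toFun (-a) := congrArg _ (Subtype.ext h1)
    have h4 : g p = - f a := by
      refine h2.trans (h3.trans ?_)
      rw [map_neg]; rfl
    simp [h4]
  have hgr := Submodule.toLinearPMap_graph_eq Γ (fun z hz h0 => hΓ z hz h0)
  have hdom : ∀ b, b ∈ Γ.toLinearPMap.domain ↔ f.domain.mkQ b ∈ S := by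
    intro b
    rw [Submodule.toLinearPMap_domain, Submodule.mem_map]
    constructor
    · rintro ⟨z, hz, rfl⟩
      obtain ⟨a, p, rfl⟩ := (hΓmem z).1 hz
      rw [← hrange]
      refine ⟨p, ?_⟩
      simp
    · intro hb
      rw [← hrange] at hb
      obtain ⟨p, hp⟩ := hb
      have h1 : b - φ p ∈ f.domain := by
        rw [← Submodule.Quotient.mk_eq_zero, ← Submodule.mkQ_apply, map_sub, ← hp]
        simp
      exact ⟨_, (hΓmem _).2 ⟨⟨_, h1⟩, p, rfl⟩, by simp⟩
  refine ⟨Γ.toLinearPMap, LinearPMap.le_of_le_graph (le_sup_left.trans hgr.ge), ?_, (hdom x).2 hx⟩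
  rw [isFlat_quot_iff] at hS' ⊢
  intro n r b hb
  obtain ⟨m, a, y, h1, h2⟩ := hS' n r (fun i => f.domain.mkQ (b i)) (by
    have := (hdom _).1 hb
    simpa only [map_sum, map_smul] using this)
  choose y' hy' using fun j => f.domain.mkQ_surjective (y j)
  refine ⟨m, a, y', fun i => ?_, h2⟩
  rw [hdom, map_sub, map_sum]
  simpa only [map_smul, hy'] using h1 i

lemma exists_extension (hC : SmallExt (R := R) C) {B : Type*} [AddCommGroup B] [Module R B]
    (A : Submodule R B) (hA : Module.IsFlat R (B ⧸ A)) (f : A →ₗ[R] C) :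
    ∃ g : B →ₗ[R] C, ∀ a : A, g a = f a := by
  obtain ⟨m, hm1, hm2⟩ := zorn_le_nonempty₀ {h : B →ₗ.[R] C | Module.IsFlat R (B ⧸ h.domain)} (by
    intro c hc hchain y hy
    have hd : DirectedOn (· ≤ ·) c := hchain.directedOn
    refine ⟨LinearPMap.sSup c hd, ?_, fun z hz => LinearPMap.le_sSup hd hz⟩
    rw [Set.mem_ofPred_eq, isFlat_quot_iff]
    intro n r b hb
    obtain ⟨z, hz, hbz⟩ := (LinearPMap.mem_domain_sSup_iff ⟨y, hy⟩ hd).1 hb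
    obtain ⟨m, a, y, h1, h2⟩ := (isFlat_quot_iff _).1 (hc hz) n r b hbz
    exact ⟨m, a, y, fun i => (LinearPMap.le_sSup hd hz).1 (h1 i), h2⟩) ⟨A, f⟩ hA
  have htop : ∀ x, x ∈ m.domain := by
    intro x
    obtain ⟨f', h1, h2, h3⟩ := exists_larger hC m hm2.1 x
    exact (hm2.2 h2 h1).1 h3
  refine ⟨m.toFun ∘ₗ LinearMap.codRestrict m.domain LinearMap.id htop, fun a => ?_⟩
  exact (hm1.2 (x := a) (y := ⟨a, htop a⟩) rfl).symm

end Zorn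

/-! ### Cotorsion modules -/

section Cat

open Limits MorphismProperty

variable {R : Type u} [Ring R]

lemma isCotorsion_of_smallExt (C : ModuleCat.{u} R) (hC : SmallExt (R := R) C) :
    C.IsCotorsion := by
  intro F hF
  let P := projectiveResolution F
  have hz : IsZero ((P.complex.linearYonedaObj ℤ C).homology 1) := by
    rw [← HomologicalComplex.exactAt_iff_isZero_homology,
      HomologicalComplex.exactAt_iff' _ 0 1 2 (by simp) (by simp),
      ShortComplex.moduleCat_exact_iff]
    intro (x : P.complex.X 1 ⟶ C) hx
    have hx' : P.complex.d 2 1 ≫ x = 0 := hx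
    have e1 := (ShortComplex.moduleCat_exact_iff _).1 (P.exact_succ 0)
    have e0 := (ShortComplex.moduleCat_exact_iff _).1 P.exact₀
    let d : P.complex.X 1 →ₗ[R] P.complex.X 0 := (P.complex.d 1 0).hom
    let q : P.complex.X 0 →ₗ[R] F := (P.π.f 0).hom
    have hq : Function.Surjective q := (ModuleCat.epi_iff_surjective (P.π.f 0)).1 inferInstance
    have hdq : LinearMap.range d = LinearMap.ker q := by
      apply le_antisymm
      · rintro _ ⟨y, rfl⟩
        have := P.complex_d_comp_π_f_zero
        exact ConcreteCategory.congr_hom this y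
      · intro y hy
        exact e0 y hy
    have hflat : Module.IsFlat R (P.complex.X 0 ⧸ LinearMap.range d) := by
      rw [hdq]
      exact isFlat_of_equiv (q.quotKerEquivOfSurjective hq).symm hF
    have hk : LinearMap.ker d ≤ LinearMap.ker x.hom := by
      intro y hy
      obtain ⟨z, hz⟩ := e1 y hy
      have h1 := ConcreteCategory.congr_hom hx' z
      have h2 : (P.complex.d 2 1).hom z = y := hz
      rw [← h2]
      exact h1
    obtain ⟨g, hg⟩ := exists_extension hC _ hflat
      ((LinearMap.ker d).liftQ x.hom hk ∘ₗ d.quotKerEquivRange.symm.toLinearMap)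
    refine ⟨ModuleCat.ofHom g, ?_⟩
    change P.complex.d 1 0 ≫ ModuleCat.ofHom g = x
    ext y
    change g (d y) = x.hom y
    refine (hg ⟨d y, ⟨y, rfl⟩⟩).trans ?_
    have : d.quotKerEquivRange.symm ⟨d y, ⟨y, rfl⟩⟩ = (LinearMap.ker d).mkQ y := by
      rw [LinearEquiv.symm_apply_eq]
      rfl
    simp only [LinearMap.comp_apply, LinearEquiv.coe_coe, this]
    rfl
  have hzExt := hz.of_iso (P.isoExt (R := ℤ) 1 C)
  exact ModuleCat.subsingleton_of_isZero hzExt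

/-- The inclusion of `K` in the free module on `Tm R`. -/
noncomputable def genMap (K : Submodule R (Tm R →₀ R)) :
    ModuleCat.of.{u} R K ⟶ ModuleCat.of.{u} R (Tm R →₀ R) :=
  ModuleCat.ofHom (X := K) (Y := Tm R →₀ R) K.subtype

/-- The generating family. -/
def genFam (R : Type u) [Ring R] : MorphismProperty (ModuleCat.{u} R) :=
  ofHoms (fun K : {K : Submodule R (Tm R →₀ R) // Module.IsFlat R ((Tm R →₀ R) ⧸ K)} =>
    genMap K.1)

lemma genFam_le_mono : genFam R ≤ monomorphisms (ModuleCat.{u} R) := by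
  rintro _ _ _ ⟨K⟩
  exact (ModuleCat.mono_iff_injective _).2 Subtype.val_injective

instance : MorphismProperty.IsSmall.{u} (genFam R) := by
  dsimp [genFam]
  infer_instance

instance : HasSmallObjectArgument.{u} (genFam R) := by
  let G : ModuleCat.{u} R := ModuleCat.of R (Tm R →₀ R)
  obtain ⟨κ, hκ', hκ⟩ := HasCardinalLT.exists_regular_cardinal.{u} (Subobject G)
  have : Fact κ.IsRegular := ⟨hκ'⟩
  have : Nonempty κ.ord.ToType := by simpa using hκ'.ne_zero
  have := WellFoundedLT.toOrderBot κ.ord.ToType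
  exact ⟨κ, inferInstance, inferInstance,
    { preservesColimit {A B X Y} i hi f hf := by
        let hf' : (monomorphisms (ModuleCat.{u} R)).TransfiniteCompositionOfShape κ.ord.ToType f :=
          { toTransfiniteCompositionOfShape := hf.toTransfiniteCompositionOfShape
            map_mem j hj := by
              have := (hf.attachCells j hj).pushouts_coproducts
              simp only [ofHoms_homFamily] at this
              refine (?_ : _ ≤ monomorphisms _) _ this
              rw [pushouts_le_iff]
              exact coproducts_le_iff.{u}.2 (genFam_le_mono (R := R)) }
        have (j j' : κ.ord.ToType) (φ : j ⟶ j') : Mono (hf'.F.map φ) := hf'.mem_map φ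
        apply IsGrothendieckAbelian.preservesColimit_coyoneda_obj_of_mono (Y := hf'.F) (κ := κ)
        have hm : Mono i := genFam_le_mono (R := R) _ hi
        obtain ⟨K⟩ := hi
        exact Subobject.hasCardinalLT_of_mono hκ (genMap K.1) }⟩

/-- A surjection whose kernel has the extension property is right orthogonal to `genFam`. -/
lemma rlp_of_ext {X Y : ModuleCat.{u} R} (p : X ⟶ Y) (hp : Function.Surjective p)
    (h : ∀ K : Submodule R (Tm R →₀ R), Module.IsFlat R ((Tm R →₀ R) ⧸ K) →
      ∀ f : K →ₗ[R] X, (∀ k, p (f k) = 0) →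
      ∃ g : (Tm R →₀ R) →ₗ[R] X, (∀ b, p (g b) = 0) ∧ ∀ k : K, g k = f k) :
    (genFam R).rlp p := by
  rintro _ _ _ ⟨K⟩
  refine ⟨fun {u v} sq => ?_⟩
  obtain ⟨l, hl⟩ := Module.projective_lifting_property p.hom v.hom hp
  have hl' : ∀ b, p (l b) = v b := fun b => LinearMap.congr_fun hl b
  have hsq : ∀ k : K.1, p (u k) = v (k : Tm R →₀ R) := fun k => ConcreteCategory.congr_hom sq.w k
  obtain ⟨g, hg1, hg2⟩ := h K.1 K.2 (u.hom - l ∘ₗ K.1.subtype) (by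
    intro k
    change p (u k - l k) = 0
    rw [map_sub, hl', hsq, sub_self])
  refine ⟨⟨⟨ModuleCat.ofHom (l + g), ?_, ?_⟩⟩⟩
  · ext k
    change l k + g k = u k
    rw [hg2]
    change l k + (u k - l k) = u k
    abel
  · refine ModuleCat.hom_ext (LinearMap.ext fun b => ?_)
    change p (l b + g b) = v b
    rw [map_add, hl', hg1, add_zero]

theorem main (M : ModuleCat.{u} R) :
    ∃ (C G : ModuleCat.{u} R) (i : M ⟶ C) (p : C ⟶ G),
      C.IsCotorsion ∧ Module.IsFlat R G ∧
        Function.Injective i ∧ Function.Surjective p ∧ Function.Exact i p := by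
  let Z : ModuleCat.{u} R := ModuleCat.of R PUnit
  let fac := (functorialFactorizationData (genFam R).rlp.llp (genFam R).rlp).factorizationData
    (0 : M ⟶ Z)
  let C : ModuleCat.{u} R := fac.Z
  let i : M ⟶ C := fac.i
  let I : Submodule R C := LinearMap.range i.hom
  have hi : (genFam R).rlp.llp i := fac.hi
  have hC : SmallExt (R := R) C := by
    intro K hK f
    have : HasLiftingProperty (genMap K) fac.p := fac.hp (genMap K) ⟨(⟨K, hK⟩ :
      {K : Submodule R (Tm R →₀ R) // Module.IsFlat R ((Tm R →₀ R) ⧸ K)})⟩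
    let f' : ModuleCat.of.{u} R K ⟶ fac.Z := ModuleCat.ofHom f
    have sq : CommSq f' (genMap K) fac.p 0 := ⟨
      ModuleCat.hom_ext (LinearMap.ext fun k => Subsingleton.elim (α := PUnit) _ _)⟩
    refine ⟨sq.lift.hom, fun k => ?_⟩
    exact ConcreteCategory.congr_hom sq.fac_left k
  refine ⟨C, ModuleCat.of R (C ⧸ I), i, ModuleCat.ofHom I.mkQ, isCotorsion_of_smallExt C hC,
    ?_, ?_, I.mkQ_surjective, ?_⟩
  · -- flatness
    let π : ((C ⧸ I) →₀ R) →ₗ[R] (C ⧸ I) := Finsupp.linearCombination R id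
    have hπ : Function.Surjective π := fun x => ⟨Finsupp.single x 1, by simp [π]⟩
    let e := π.quotKerEquivOfSurjective hπ
    refine isFlat_of_equiv e ?_
    refine isFlat_of_extend _ _ fun n r f hf => ?_
    obtain ⟨g, hg⟩ := DE_extend _ f
    let q : ModuleCat.of R (DE R) ⟶ ModuleCat.of R (DE R ⧸ DS r) := ModuleCat.ofHom (DS r).mkQ
    have hq0 : ∀ x : DE R, q x = 0 ↔ x ∈ DS r := fun x => Submodule.Quotient.mk_eq_zero _
    have hq : (genFam R).rlp q := by
      refine rlp_of_ext q (DS r).mkQ_surjective fun K hK f hf => ?_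
      obtain ⟨g, hg1, hg2⟩ := DS_extend r K (fun b hb => pure_of_isFlat K hK r b hb) f
        (fun k => (hq0 _).1 (hf k))
      exact ⟨g, fun b => (hq0 _).2 (hg1 b), hg2⟩
    let gb : (((C ⧸ I) →₀ R) ⧸ LinearMap.ker π) →ₗ[R] (DE R ⧸ DS r) :=
      (LinearMap.ker π).mapQ (DS r) g (fun k hk => by
        rw [Submodule.mem_comap]
        have := hg ⟨k, hk⟩
        rw [this]
        exact hf _)
    let v : C ⟶ ModuleCat.of R (DE R ⧸ DS r) :=
      ModuleCat.ofHom (gb ∘ₗ e.symm.toLinearMap ∘ₗ I.mkQ)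
    have sq : CommSq (0 : M ⟶ ModuleCat.of R (DE R)) i q v := ⟨by
      ext m
      change (0 : DE R ⧸ DS r) = gb (e.symm (I.mkQ (i m)))
      have : I.mkQ (i m) = 0 := (Submodule.Quotient.mk_eq_zero _).2 ⟨m, rfl⟩
      rw [this, map_zero, map_zero]⟩
    have := hi q hq
    let w : C →ₗ[R] DE R := sq.lift.hom
    have hw1 : ∀ m, w (i m) = 0 := fun m => ConcreteCategory.congr_hom sq.fac_left m
    have hw2 : ∀ c, (DS r).mkQ (w c) = gb (e.symm (I.mkQ c)) :=
      fun c => ConcreteCategory.congr_hom sq.fac_right c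
    let wb : (C ⧸ I) →ₗ[R] DE R := I.liftQ w (by
      rintro _ ⟨m, rfl⟩
      exact hw1 m)
    refine ⟨g - wb ∘ₗ π, fun b => ?_, fun a => ?_⟩
    · rw [← Submodule.Quotient.mk_eq_zero, ← Submodule.mkQ_apply, LinearMap.sub_apply, map_sub,
        sub_eq_zero, LinearMap.comp_apply]
      obtain ⟨c, hc⟩ := I.mkQ_surjective (π b)
      have h1 : wb (π b) = w c := by
        rw [← hc]; rfl
      have h2 : e.symm (π b) = (LinearMap.ker π).mkQ b := by
        rw [LinearEquiv.symm_apply_eq]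
        rfl
      rw [h1, hw2, hc, h2]
      rfl
    · have : π a = 0 := a.2
      rw [LinearMap.sub_apply, LinearMap.comp_apply, this, map_zero, sub_zero, hg]
  · -- injectivity
    refine (injective_iff_map_eq_zero i.hom).2 fun m hm => ?_
    by_contra hne
    obtain ⟨c, hc⟩ := CharacterModule.exists_character_apply_ne_zero_of_ne_zero hne
    let χ := (show M →+ AddCircle (1 : ℚ) from c)
    let q : ModuleCat.of R (DE R) ⟶ Z := 0
    have hq : (genFam R).rlp q := by
      refine rlp_of_ext q (fun y => ⟨0, Subsingleton.elim (α := PUnit) _ _⟩) fun K hK f hf => ?_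
      obtain ⟨g, hg⟩ := DE_extend K f
      exact ⟨g, fun b => rfl, hg⟩
    have sq : CommSq (ModuleCat.ofHom (toDE (R := R) χ)) i q 0 := ⟨by simp [q]⟩
    have := hi q hq
    have h1 : sq.lift.hom (i.hom m) = toDE (R := R) χ m :=
      ConcreteCategory.congr_hom sq.fac_left m
    rw [hm, map_zero] at h1
    have h2 := congrArg (fun φ : DE R => φ.app 1) h1
    simp only [toDE_app, one_smul] at h2
    exact hc h2.symm
  · intro c
    refine (Submodule.Quotient.mk_eq_zero I).trans ?_
    rfl

end Cat

end CotorsionPre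

/-- **Special preenvelope** (Bican–El Bashir–Enochs).  Every left `R`-module `M` can be
included into a short exact sequence `0 → M → C → G → 0` with `C` cotorsion and `G`
flat. -/
theorem exists_cotorsion_preenvelope
    {R : Type u} [Ring R] (M : ModuleCat.{u} R) :
    ∃ (C G : ModuleCat.{u} R) (i : M ⟶ C) (p : C ⟶ G),
      C.IsCotorsion ∧ Module.IsFlat R G ∧
        Function.Injective i ∧ Function.Surjective p ∧ Function.Exact i p := by
  exact CotorsionPre.main M
end

section
/- Let R be an associative unital ring and let F• be an unbounded cochain complex of flat left R-modules. Then F• can be included into a termwise short exact sequence of complexes 0 → F• → C• → G• → 0 in which C• is a contractible complex whose terms are flat cotorsion left R-modules and G• is a complex of flat left R-modules. -/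
universe u

open CategoryTheory

open CategoryTheory Limits

namespace FlatCot

section Alg

variable {R : Type u} [Ring R]

/-- `N` is a submodule with flat quotient, equationally. -/
def RelFlat {M : Type*} [AddCommGroup M] [Module R M] (N : Submodule R M) : Prop :=
  ∀ (n : ℕ) (r : Fin n → R) (x : Fin n → M), ∑ i, r i • x i ∈ N →
    ∃ (m : ℕ) (a : Fin n → Fin m → R) (y : Fin m → M),
      (∀ i, x i - ∑ j, a i j • y j ∈ N) ∧ ∀ j, ∑ i, r i * a i j = 0

lemma exists_fin {M : Type*} [AddCommGroup M] [Module R M] (N : Submodule R M)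
    {n : ℕ} (r : Fin n → R) (x : Fin n → M) {J : Type*} [Fintype J]
    (a : Fin n → J → R) (y : J → M) (h1 : ∀ i, x i - ∑ j, a i j • y j ∈ N)
    (h2 : ∀ j, ∑ i, r i * a i j = 0) :
    ∃ (m : ℕ) (a : Fin n → Fin m → R) (y : Fin m → M),
      (∀ i, x i - ∑ j, a i j • y j ∈ N) ∧ ∀ j, ∑ i, r i * a i j = 0 := by
  let e := Fintype.equivFin J
  refine ⟨Fintype.card J, fun i j => a i (e.symm j), fun j => y (e.symm j), fun i => ?_,
    fun j => h2 _⟩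
  rw [Equiv.sum_comp e.symm (fun j => a i j • y j)]
  exact h1 i

lemma relFlat_bot {M : Type*} [AddCommGroup M] [Module R M] :
    RelFlat (⊥ : Submodule R M) ↔ Module.IsFlat R M := by
  unfold RelFlat Module.IsFlat
  simp only [Submodule.mem_bot, sub_eq_zero]

/-- Pulling back along a surjection. -/
lemma RelFlat.comap {M M' : Type*} [AddCommGroup M] [Module R M] [AddCommGroup M'] [Module R M']
    {N : Submodule R M'} (h : RelFlat N) (f : M →ₗ[R] M') (hf : Function.Surjective f) :
    RelFlat (N.comap f) := by
  intro n r x hx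
  obtain ⟨m, a, y, h1, h2⟩ := h n r (fun i => f (x i)) (by simpa using hx)
  choose z hz using fun j => hf (y j)
  exact ⟨m, a, z, fun i => by simpa [hz] using h1 i, h2⟩

lemma RelFlat.of_comap {M M' : Type*} [AddCommGroup M] [Module R M] [AddCommGroup M'] [Module R M']
    {N : Submodule R M'} (f : M →ₗ[R] M') (hf : Function.Surjective f)
    (h : RelFlat (N.comap f)) : RelFlat N := by
  intro n r x hx
  choose z hz using fun j => hf (x j)
  obtain ⟨m, a, y, h1, h2⟩ := h n r z (by simpa [hz] using hx)
  exact ⟨m, a, fun j => f (y j), fun i => by simpa [hz] using h1 i, h2⟩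

lemma relFlat_ker_iff {M M' : Type*} [AddCommGroup M] [Module R M] [AddCommGroup M'] [Module R M']
    (f : M →ₗ[R] M') (hf : Function.Surjective f) :
    RelFlat (LinearMap.ker f) ↔ Module.IsFlat R M' := by
  rw [← relFlat_bot]
  exact ⟨RelFlat.of_comap f hf, fun h => h.comap f hf⟩

/-- Extensions. -/
lemma RelFlat.trans {M M' : Type*} [AddCommGroup M] [Module R M] [AddCommGroup M'] [Module R M']
    {N : Submodule R M} (f : M →ₗ[R] M') (hf : Function.Injective f)
    (h : RelFlat N) (h' : RelFlat (LinearMap.range f)) : RelFlat (N.map f) := by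
  intro n r x hx
  obtain ⟨m, a, y, h1, h2⟩ := h' n r x (by
    obtain ⟨w, _, hw⟩ := hx
    exact ⟨w, hw⟩)
  choose w hw using h1
  have key : ∑ i, r i • f (w i) = ∑ i, r i • x i := by
    simp only [hw, smul_sub, Finset.sum_sub_distrib, Finset.smul_sum, smul_smul]
    rw [sub_eq_self, Finset.sum_comm]
    simp [← Finset.sum_smul, h2]
  obtain ⟨m', a', y', h1', h2'⟩ := h n r w (by
    rw [← key] at hx
    obtain ⟨v, hv, hv'⟩ := hx
    have : v = ∑ i, r i • w i := hf (by simpa using hv')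
    rwa [← this])
  refine exists_fin _ r x (J := Fin m ⊕ Fin m') (fun i => Sum.elim (a i) (a' i))
    (Sum.elim y (fun j => f (y' j))) (fun i => ?_) ?_
  · refine ⟨_, h1' i, ?_⟩
    simp [hw]
    abel
  · rintro (j | j)
    · simpa using h2 j
    · simpa using h2' j

lemma isFlat_of_relFlat_range {M M' : Type*} [AddCommGroup M] [Module R M] [AddCommGroup M']
    [Module R M'] (f : M →ₗ[R] M') (hf : Function.Injective f)
    (h : Module.IsFlat R M) (h' : RelFlat (LinearMap.range f)) : Module.IsFlat R M' := by
  rw [← relFlat_bot] at h ⊢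
  simpa using h.trans f hf h'

lemma isFlat_prod {M M' : Type*} [AddCommGroup M] [Module R M] [AddCommGroup M']
    [Module R M'] (h : Module.IsFlat R M) (h' : Module.IsFlat R M') : Module.IsFlat R (M × M') := by
  refine isFlat_of_relFlat_range (LinearMap.inl R M M') LinearMap.inl_injective h ?_
  rw [LinearMap.range_inl]
  exact (relFlat_ker_iff _ LinearMap.snd_surjective).2 h'

/-- Terms generating small pure submodules. -/
inductive Term (R : Type u) : Type u
  | base : Term R
  | add (s t : Term R) : Term R
  | smul (r : R) (t : Term R) : Term R
  | solve (n : ℕ) (r : Fin n → R) (i : Fin n) (t : Term R) : Term R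
  | triv (n : ℕ) (r : Fin n → R) (t : Fin n → Term R) (j : ℕ) : Term R

open Classical in
/-- Chosen solution of `∑ r i • x i = w`. -/
noncomputable def solveFun {M : Type*} [AddCommGroup M] [Module R M]
    (n : ℕ) (r : Fin n → R) (w : M) : Fin n → M :=
  if h : ∃ x : Fin n → M, ∑ i, r i • x i = w then h.choose else 0

lemma solveFun_spec {M : Type*} [AddCommGroup M] [Module R M]
    (n : ℕ) (r : Fin n → R) (x : Fin n → M) :
    ∑ i, r i • solveFun n r (∑ i, r i • x i) i = ∑ i, r i • x i := by
  have h : ∃ x' : Fin n → M, ∑ i, r i • x' i = ∑ i, r i • x i := ⟨x, rfl⟩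
  unfold solveFun
  rw [dif_pos h]
  exact h.choose_spec

/-- trivialisation of relation. -/
def IsTriv {M : Type*} [AddCommGroup M] [Module R M]
    {n : ℕ} (r : Fin n → R) (x : Fin n → M) (m : ℕ) (y : Fin m → M) : Prop :=
  ∃ (a : Fin n → Fin m → R), (∀ i, x i = ∑ j, a i j • y j) ∧ ∀ j, ∑ i, r i * a i j = 0

open Classical in
/-- Chosen trivialisation. -/
noncomputable def trivFun {M : Type*} [AddCommGroup M] [Module R M]
    (n : ℕ) (r : Fin n → R) (x : Fin n → M) : ℕ → M :=
  if h : ∃ (y : ℕ → M) (m : ℕ), IsTriv r x m (fun j => y j) then h.choose else 0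

lemma trivFun_spec {M : Type*} [AddCommGroup M] [Module R M] (hM : Module.IsFlat R M)
    (n : ℕ) (r : Fin n → R) (x : Fin n → M) (hx : ∑ i, r i • x i = 0) :
    ∃ m, IsTriv r x m (fun j => trivFun n r x j) := by
  have h : ∃ (y : ℕ → M) (m : ℕ), IsTriv r x m (fun j => y j) := by
    obtain ⟨m, a, y, h1, h2⟩ := hM n r x hx
    refine ⟨fun j => if h : j < m then y ⟨j, h⟩ else 0, m, a, fun i => ?_, h2⟩
    simp [h1]
  unfold trivFun
  rw [dif_pos h]
  exact h.choose_spec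

/-- Evaluation. -/
noncomputable def Term.eval {M : Type*} [AddCommGroup M] [Module R M] (b : M) : Term R → M
  | .base => b
  | .add s t => s.eval b + t.eval b
  | .smul r t => r • t.eval b
  | .solve n r i t => solveFun n r (t.eval b) i
  | .triv n r t j => trivFun n r (fun i => (t i).eval b) j

/-- The submodule of values. -/
def pureSub {M : Type*} [AddCommGroup M] [Module R M] (b : M) : Submodule R M where
  carrier := Set.range (Term.eval (R := R) b)
  add_mem' := by
    rintro _ _ ⟨s, rfl⟩ ⟨t, rfl⟩
    exact ⟨.add s t, rfl⟩
  zero_mem' := ⟨.smul 0 .base, by simp [Term.eval]⟩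
  smul_mem' := by
    rintro c _ ⟨s, rfl⟩
    exact ⟨.smul c s, rfl⟩

lemma relFlat_pureSub {M : Type*} [AddCommGroup M] [Module R M] (hM : Module.IsFlat R M) (b : M) :
    RelFlat (pureSub (R := R) b) := by
  intro n r x hx
  have hz : ∀ i, solveFun n r (∑ i, r i • x i) i ∈ pureSub (R := R) b := by
    obtain ⟨t, ht⟩ := hx
    rw [← ht]
    exact fun i => ⟨.solve n r i t, rfl⟩
  obtain ⟨m, a, y, h1, h2⟩ := hM n r (fun i => x i - solveFun n r (∑ i, r i • x i) i) (by
    simp only [smul_sub, Finset.sum_sub_distrib, solveFun_spec, sub_self])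
  refine ⟨m, a, y, fun i => ?_, h2⟩
  rw [← h1]
  simpa using hz i

lemma pureSub_flat {M : Type*} [AddCommGroup M] [Module R M] (hM : Module.IsFlat R M) (b : M)
    (n : ℕ) (r : Fin n → R) (x : Fin n → M) (hx : ∑ i, r i • x i = 0)
    (hx' : ∀ i, x i ∈ pureSub (R := R) b) :
    ∃ m y, (∀ j, y j ∈ pureSub (R := R) b) ∧ IsTriv r x m y := by
  obtain ⟨m, h⟩ := trivFun_spec hM n r x hx
  refine ⟨m, _, fun j => ?_, h⟩
  choose t ht using hx'
  obtain rfl : (fun i => (t i).eval b) = x := funext ht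
  exact ⟨.triv n r t j, rfl⟩

/-- extension property -/
def ExtProp (R : Type u) [Ring R] (C : Type u) [AddCommGroup C] [Module R C] : Prop :=
  ∀ (P : Type u) [AddCommGroup P] [Module R P] (K : Submodule R P), RelFlat K →
    ∀ f : K →ₗ[R] C, ∃ g : P →ₗ[R] C, ∀ x : K, g x = f x

lemma ExtProp.prod {C D : Type u} [AddCommGroup C] [Module R C] [AddCommGroup D] [Module R D]
    (hC : ExtProp R C) (hD : ExtProp R D) : ExtProp R (C × D) := by
  intro P _ _ K hK f
  obtain ⟨g, hg⟩ := hC P K hK (LinearMap.fst R C D ∘ₗ f)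
  obtain ⟨g', hg'⟩ := hD P K hK (LinearMap.snd R C D ∘ₗ f)
  exact ⟨g.prod g', fun x => by ext <;> simp [hg, hg']⟩

lemma step {P : Type u} [AddCommGroup P] [Module R P] (K : Submodule R P) (hK : RelFlat K)
    (hne : K ≠ ⊤) : ∃ φ : (Term R →₀ R) →ₗ[R] P, RelFlat (K.comap φ) ∧
      RelFlat (K ⊔ LinearMap.range φ) ∧ ¬ LinearMap.range φ ≤ K := by
  obtain ⟨p, hp⟩ : ∃ p, p ∉ K := by
    by_contra! h
    exact hne (eq_top_iff.2 fun x _ => h x)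
  have hM : Module.IsFlat R (P ⧸ K) := by
    rw [← relFlat_ker_iff K.mkQ K.mkQ_surjective, Submodule.ker_mkQ]
    exact hK
  let b : P ⧸ K := K.mkQ p
  choose s hs using fun t : Term R => K.mkQ_surjective (t.eval b)
  let φ : (Term R →₀ R) →ₗ[R] P := Finsupp.linearCombination R s
  have hφ1 : ∀ t, K.mkQ (φ (Finsupp.single t 1)) = t.eval b := fun t => by simp [φ, hs]
  have hφ2 : ∀ v, K.mkQ (φ v) ∈ pureSub (R := R) b := by
    intro v
    simp only [φ, Finsupp.linearCombination_apply, Finsupp.sum, map_sum, map_smul, hs]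
    exact Submodule.sum_mem _ fun t _ => Submodule.smul_mem _ _ ⟨t, rfl⟩
  refine ⟨φ, ?_, ?_, ?_⟩
  · intro n r x hx
    have hx0 : ∑ i, r i • K.mkQ (φ (x i)) = 0 := by
      have : K.mkQ (φ (∑ i, r i • x i)) = 0 := (Submodule.Quotient.mk_eq_zero K).2 hx
      simpa only [map_sum, map_smul] using this
    obtain ⟨m, y, hy, a, h1, h2⟩ := pureSub_flat hM b n r _ hx0 (fun i => hφ2 _)
    choose t ht using hy
    refine ⟨m, a, fun j => Finsupp.single (t j) 1, fun i => ?_, h2⟩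
    rw [Submodule.mem_comap, ← Submodule.ker_mkQ K, LinearMap.mem_ker]
    simp only [map_sub, map_sum, map_smul, hφ1, ht, h1 i, sub_self]
  · have : K ⊔ LinearMap.range φ = (pureSub (R := R) b).comap K.mkQ := by
      apply le_antisymm
      · refine sup_le (fun k hk => ?_) ?_
        · rw [Submodule.mem_comap, show K.mkQ k = 0 by simpa using hk]
          exact zero_mem _
        · rintro _ ⟨v, rfl⟩
          exact hφ2 v
      · rintro q ⟨t, ht⟩
        rw [Submodule.mem_sup]
        refine ⟨q - φ (Finsupp.single t 1), ?_, φ (Finsupp.single t 1), ⟨_, rfl⟩, by simp⟩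
        rw [← Submodule.ker_mkQ K, LinearMap.mem_ker, map_sub, hφ1, ht, sub_self]
    rw [this]
    exact (relFlat_pureSub hM b).comap _ K.mkQ_surjective
  · intro h
    have h0 : K.mkQ (φ (Finsupp.single .base 1)) = 0 := by
      simpa using h ⟨Finsupp.single .base 1, rfl⟩
    rw [hφ1] at h0
    exact hp (by simpa [Term.eval, b] using h0)

/-- Eklof-type lemma. -/
lemma extProp_of_free {C : Type u} [AddCommGroup C] [Module R C]
    (h : ∀ K : Submodule R (Term R →₀ R), RelFlat K → ∀ f : K →ₗ[R] C,
      ∃ g : (Term R →₀ R) →ₗ[R] C, ∀ x : K, g x = f x) : ExtProp R C := by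
  intro P _ _ K hK f
  let f0 : P →ₗ.[R] C := ⟨K, f⟩
  obtain ⟨g, hg0, hg⟩ := zorn_le_nonempty₀ {g : P →ₗ.[R] C | f0 ≤ g ∧ RelFlat g.domain} (by
    intro c hc hchain y hy
    refine ⟨LinearPMap.sSup c hchain.directedOn, ⟨?_, ?_⟩, fun z hz => LinearPMap.le_sSup _ hz⟩
    · exact (hc hy).1.trans (LinearPMap.le_sSup _ hy)
    · intro n r x hx
      rw [LinearPMap.mem_domain_sSup_iff ⟨y, hy⟩] at hx
      obtain ⟨z, hz, hxz⟩ := hx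
      obtain ⟨m, a, y, h1, h2⟩ := (hc hz).2 n r x hxz
      exact ⟨m, a, y, fun i => (LinearPMap.le_sSup hchain.directedOn hz).1 (h1 i), h2⟩)
    f0 ⟨le_rfl, hK⟩
  obtain ⟨⟨hf0, hgf⟩, hmax⟩ := hg
  by_cases htop : g.domain = ⊤
  · refine ⟨g.toFun ∘ₗ LinearMap.codRestrict g.domain LinearMap.id (by simp [htop]), fun x => ?_⟩
    exact (hf0.2 (x := x) (y := ⟨x, by simp [htop]⟩) rfl).symm
  · exfalso
    obtain ⟨φ, h1, h2, h3⟩ := step g.domain hgf htop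
    obtain ⟨k, hk⟩ := h _ h1 (g.toFun ∘ₗ (φ.restrict (p := g.domain.comap φ) (q := g.domain)
      (fun x hx => hx)))
    let Φ : (g.domain × (Term R →₀ R)) →ₗ[R] P := g.domain.subtype.coprod φ
    let Ψ : (g.domain × (Term R →₀ R)) →ₗ[R] C := g.toFun.coprod k
    have hker : LinearMap.ker Φ ≤ LinearMap.ker Ψ := by
      rintro ⟨p, v⟩ hpv
      have hpv' : (p : P) + φ v = 0 := hpv
      have hv : φ v ∈ g.domain := by
        rw [← neg_eq_of_add_eq_zero_right hpv']
        exact neg_mem p.2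
      have h4 : k v = g.toFun ⟨φ v, hv⟩ := hk ⟨v, hv⟩
      change g.toFun p + k v = 0
      rw [h4, ← map_add, show p + ⟨φ v, hv⟩ = 0 from Subtype.ext hpv', map_zero]
    let ψ : LinearMap.range Φ →ₗ[R] C :=
      (Submodule.liftQ _ Ψ hker) ∘ₗ Φ.quotKerEquivRange.symm.toLinearMap
    have hψ : ∀ w, ψ ⟨Φ w, ⟨w, rfl⟩⟩ = Ψ w := by
      intro w
      have : Φ.quotKerEquivRange.symm ⟨Φ w, ⟨w, rfl⟩⟩ = Submodule.Quotient.mk w := by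
        rw [LinearEquiv.symm_apply_eq]
        rfl
      simp [ψ, this]
    have hr : LinearMap.range Φ = g.domain ⊔ LinearMap.range φ := by
      simp [Φ, LinearMap.range_coprod]
    let g' : P →ₗ.[R] C := ⟨LinearMap.range Φ, ψ⟩
    have hgg' : g ≤ g' := by
      refine ⟨?_, ?_⟩
      · change g.domain ≤ LinearMap.range Φ
        rw [hr]
        exact le_sup_left
      · rintro x ⟨y, hy⟩ hxy
        obtain rfl : (x : P) = y := hxy
        have h5 := hψ (x, 0)
        have h6 : (⟨(x : P), hy⟩ : LinearMap.range Φ) = ⟨Φ (x, 0), ⟨_, rfl⟩⟩ := by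
          ext
          simp [Φ]
        change g.toFun x = ψ ⟨(x : P), hy⟩
        rw [h6, h5]
        simp [Ψ]
    have := hmax (y := g') ⟨hf0.trans hgg', by
      change RelFlat (LinearMap.range Φ)
      rwa [hr]⟩ hgg'
    apply h3
    refine le_trans ?_ this.1
    change _ ≤ LinearMap.range Φ
    rw [hr]
    exact le_sup_right

end Alg

section Cat

variable (R : Type u) [Ring R]

/-- Morphisms with (equationally) flat cokernel. -/
def cokFlat : MorphismProperty (ModuleCat.{u} R) :=
  fun _ _ f => RelFlat (LinearMap.range f.hom)

/-- Monomorphisms with flat cokernel. -/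
def monoFlat : MorphismProperty (ModuleCat.{u} R) :=
  MorphismProperty.monomorphisms _ ⊓ cokFlat R

instance : (cokFlat R).IsStableUnderRetracts where
  of_retract {X Y Z W f g} h hg := by
    intro n r x hx
    obtain ⟨w, hw⟩ := hx
    have e1 : ∀ v, h.i.right (f v) = g (h.i.left v) := fun v =>
      (ConcreteCategory.congr_hom h.i_w v).symm
    have e2 : ∀ v, h.r.right (g v) = f (h.r.left v) := fun v =>
      (ConcreteCategory.congr_hom h.r_w v).symm
    have e3 : ∀ v, h.r.right (h.i.right v) = v := fun v =>
      ConcreteCategory.congr_hom h.right.retract v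
    obtain ⟨m, a, y, h1, h2⟩ := hg n r (fun i => h.i.right (x i)) ⟨h.i.left w, by
      refine (e1 w).symm.trans ?_
      rw [show f w = _ from hw]
      simp⟩
    refine ⟨m, a, fun j => h.r.right (y j), fun i => ?_, h2⟩
    obtain ⟨v, hv⟩ := h1 i
    refine ⟨h.r.left v, (e2 v).symm.trans ?_⟩
    rw [show g v = _ from hv]
    simp [e3]

instance : (cokFlat R).IsStableUnderCobaseChange where
  of_isPushout {A A' B B' f g f' g'} sq hf := by
    have hsurj : ∀ b : B', ∃ u v, b = f' u + g' v := by
      let N : Submodule R B' := LinearMap.range f'.hom ⊔ LinearMap.range g'.hom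
      have hz : ModuleCat.ofHom N.mkQ = 0 := by
        apply sq.hom_ext
        · ext u
          have : f' u ∈ N := Submodule.mem_sup_left ⟨u, rfl⟩
          simpa using this
        · ext u
          have : g' u ∈ N := Submodule.mem_sup_right ⟨u, rfl⟩
          simpa using this
      intro b
      have hb : b ∈ N := by
        have := ConcreteCategory.congr_hom hz b
        simpa using this
      obtain ⟨_, ⟨u, rfl⟩, _, ⟨v, rfl⟩, h⟩ := Submodule.mem_sup.1 hb
      exact ⟨u, v, h.symm⟩
    have hker : ∀ v : A', g' v ∈ LinearMap.range f'.hom → v ∈ LinearMap.range f.hom := by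
      intro v hv
      let q := sq.desc (0 : B ⟶ ModuleCat.of R (A' ⧸ LinearMap.range f.hom))
        (ModuleCat.ofHom (LinearMap.range f.hom).mkQ) (by
          ext a
          exact ((Submodule.Quotient.mk_eq_zero (LinearMap.range f.hom)).2
            (LinearMap.mem_range_self f.hom a)).symm)
      have q1 : ∀ u, q (f' u) = 0 := fun u =>
        ConcreteCategory.congr_hom (sq.inl_desc _ _ _) u
      have q2 : ∀ u, q (g' u) = (LinearMap.range f.hom).mkQ u := fun u =>
        ConcreteCategory.congr_hom (sq.inr_desc _ _ _) u
      obtain ⟨u, hu⟩ := hv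
      have := q2 v
      rw [← hu] at this
      have h0 := (q1 u).symm.trans this
      exact (Submodule.Quotient.mk_eq_zero _).1 h0.symm
    have hcomm : ∀ a, f' (g a) = g' (f a) := fun a => ConcreteCategory.congr_hom sq.w a
    intro n r x hx
    choose p v hpv using fun i => hsurj (x i)
    obtain ⟨m, a, y, h1, h2⟩ := hf n r v (by
      apply hker
      have : g' (∑ i, r i • v i) = ∑ i, r i • x i - f' (∑ i, r i • p i) := by
        simp [hpv, Finset.sum_add_distrib]
      rw [this]
      exact sub_mem hx ⟨_, rfl⟩)
    refine ⟨m, a, fun j => g' (y j), fun i => ?_, h2⟩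
    obtain ⟨w, hw⟩ := h1 i
    refine ⟨p i + g w, ?_⟩
    have : f' (g w) = _ := (hcomm w).trans (congrArg g' hw)
    simp only [map_add]
    erw [this]
    simp [hpv]
    abel

instance : (cokFlat R).RespectsIso :=
  inferInstance

instance {J : Type u} : (cokFlat R).IsStableUnderCoproductsOfShape J := by
  apply MorphismProperty.IsStableUnderCoproductsOfShape.mk
  intro X₁ X₂ _ _ f hf
  classical
  let ι := fun k => Sigma.ι X₂ k
  let π := fun k => Sigma.π X₂ k
  have hπι : ∀ k x, π k (ι k x) = x := fun k x =>
    ConcreteCategory.congr_hom (Sigma.ι_π_eq_id X₂ k) x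
  have hπι' : ∀ k l x, k ≠ l → π l (ι k x) = 0 := fun k l x h =>
    ConcreteCategory.congr_hom (Sigma.ι_π_of_ne X₂ h) x
  have hfι : ∀ k x, Limits.Sigma.map f (Sigma.ι X₁ k x) = ι k (f k x) := fun k x =>
    ConcreteCategory.congr_hom (Sigma.ι_map f k) x
  have hπf : ∀ k x, π k (Limits.Sigma.map f x) = f k (Sigma.π X₁ k x) := by
    intro k
    have : Limits.Sigma.map f ≫ Sigma.π X₂ k = Sigma.π X₁ k ≫ f k := by
      apply Sigma.hom_ext
      intro l
      by_cases h : l = k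
      · subst h
        simp
      · simp [Sigma.ι_π_of_ne_assoc X₁ h, Sigma.ι_π_of_ne X₂ h]
    exact fun x => ConcreteCategory.congr_hom this x
  have hfin : ∀ x : (∐ X₂ : ModuleCat R), ∃ s : Finset J, ∀ t, s ⊆ t →
      x = ∑ k ∈ t, ι k (π k x) := by
    let N : Submodule R (∐ X₂ : ModuleCat R) :=
      { carrier := {x | ∃ s : Finset J, ∀ t, s ⊆ t → x = ∑ k ∈ t, ι k (π k x)}
        add_mem' := by
          rintro x y ⟨s, hs⟩ ⟨s', hs'⟩
          refine ⟨s ∪ s', fun t ht => ?_⟩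
          simp only [map_add, Finset.sum_add_distrib]
          rw [← hs t (Finset.union_subset_left ht), ← hs' t (Finset.union_subset_right ht)]
        zero_mem' := ⟨∅, fun t _ => by simp⟩
        smul_mem' := by
          rintro c x ⟨s, hs⟩
          refine ⟨s, fun t ht => ?_⟩
          simp only [map_smul, ← Finset.smul_sum]
          rw [← hs t ht] }
    have hz : ModuleCat.ofHom N.mkQ = 0 := by
      apply Sigma.hom_ext
      intro k
      ext u
      have : ι k u ∈ N := by
        refine ⟨{k}, fun t ht => ?_⟩
        rw [Finset.sum_eq_single k]
        · rw [hπι]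
        · intro l _ hl
          rw [hπι' _ _ _ hl.symm, map_zero]
        · intro h
          exact absurd (ht (Finset.mem_singleton_self k)) h
      exact (Submodule.Quotient.mk_eq_zero _).2 this
    intro x
    exact (Submodule.Quotient.mk_eq_zero N).1 (ConcreteCategory.congr_hom hz x)
  intro n r x hx
  choose s hs using fun i => hfin (x i)
  let t := Finset.univ.biUnion s
  have ht : ∀ i, x i = ∑ k ∈ t, ι k (π k (x i)) := fun i =>
    hs i t (Finset.subset_biUnion_of_mem s (Finset.mem_univ i))
  obtain ⟨w, hw⟩ := hx
  have key := fun k => hf k n r (fun i => π k (x i)) ⟨Sigma.π X₁ k w, by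
    refine (hπf k w).symm.trans ?_
    rw [show Limits.Sigma.map f w = _ from hw]
    simp⟩
  choose m a y h1 h2 using key
  refine exists_fin _ r x (J := Σ k : t, Fin (m k)) (fun i j => a j.1 i j.2)
    (fun j => ι j.1 (y j.1 j.2)) (fun i => ?_) (fun j => h2 _ _)
  rw [Fintype.sum_sigma]
  have : x i = ∑ k : t, ι k (π k (x i)) := by
    rw [Finset.sum_coe_sort t (fun k => ι k (π k (x i)))]
    exact ht i
  rw [this, ← Finset.sum_sub_distrib]
  refine Submodule.sum_mem _ fun k _ => ?_
  obtain ⟨v, hv⟩ := h1 k i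
  refine ⟨Sigma.ι X₁ k v, (hfι k v).trans ?_⟩
  rw [show f k v = _ from hv]
  simp

instance {J : Type u} [LinearOrder J] [OrderBot J] :
    (cokFlat R).IsStableUnderColimitsOfShape J where
  condition X₁ X₂ c₁ c₂ h₁ h₂ f hf φ hφ := by
    intro n r x hx
    obtain ⟨w, hw⟩ := hx
    have hφ' : ∀ j v, φ (c₁.ι.app j v) = c₂.ι.app j (f.app j v) := fun j v =>
      ConcreteCategory.congr_hom (hφ j) v
    have n1 : ∀ {j k : J} (g : j ⟶ k) v, c₁.ι.app k (X₁.map g v) = c₁.ι.app j v := fun g v =>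
      ConcreteCategory.congr_hom (c₁.w g) v
    have n2 : ∀ {j k : J} (g : j ⟶ k) v, c₂.ι.app k (X₂.map g v) = c₂.ι.app j v := fun g v =>
      ConcreteCategory.congr_hom (c₂.w g) v
    have nf : ∀ {j k : J} (g : j ⟶ k) v, f.app k (X₁.map g v) = X₂.map g (f.app j v) := fun g v =>
      ConcreteCategory.congr_hom (f.naturality g) v
    choose j x' hx' using fun i => Concrete.isColimit_exists_rep X₂ h₂ (x i)
    obtain ⟨j0, w', hw'⟩ := Concrete.isColimit_exists_rep X₁ h₁ w
    let J1 : J := max j0 (Finset.univ.sup j)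
    have hj : ∀ i, j i ≤ J1 := fun i => (Finset.le_sup (Finset.mem_univ i)).trans (le_max_right _ _)
    have hj0 : j0 ≤ J1 := le_max_left _ _
    let x1 : Fin n → X₂.obj J1 := fun i => X₂.map (homOfLE (hj i)) (x' i)
    have hx1 : ∀ i, c₂.ι.app J1 (x1 i) = x i := fun i => (n2 (homOfLE (hj i)) (x' i)).trans (hx' i)
    let w1 := X₁.map (homOfLE hj0) w'
    have hw1 : c₁.ι.app J1 w1 = w := (n1 (homOfLE hj0) w').trans hw'
    obtain ⟨k, g, g', hgg⟩ := Concrete.isColimit_exists_of_rep_eq X₂ h₂ (∑ i, r i • x1 i)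
      (f.app J1 w1) (by
        rw [← hφ', hw1]
        refine Eq.trans ?_ hw.symm
        simp [hx1])
    obtain rfl : g = g' := Subsingleton.elim _ _
    obtain ⟨m, a, y, h1, h2⟩ := hf k n r (fun i => X₂.map g (x1 i)) ⟨X₁.map g w1, by
      refine (nf g w1).trans (hgg.symm.trans ?_)
      simp⟩
    refine ⟨m, a, fun j => c₂.ι.app k (y j), fun i => ?_, h2⟩
    obtain ⟨v, hv⟩ := h1 i
    refine ⟨c₁.ι.app k v, (hφ' k v).trans ?_⟩
    rw [show f.app k v = _ from hv]
    simp only [map_sub, map_sum, map_smul]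
    rw [n2, hx1]

instance : (monoFlat R).IsStableUnderRetracts where
  of_retract h hg := ⟨MorphismProperty.of_retract h hg.1, MorphismProperty.of_retract h hg.2⟩

instance : (monoFlat R).RespectsIso :=
  inferInstance

instance : (monoFlat R).IsStableUnderCobaseChange where
  of_isPushout sq hf := ⟨MorphismProperty.of_isPushout sq hf.1,
    MorphismProperty.of_isPushout sq hf.2⟩

instance : MorphismProperty.IsStableUnderCoproducts.{u} (monoFlat R) where
  isStableUnderCoproductsOfShape J :=
    { condition := fun X₁ X₂ c₁ c₂ h₁ h₂ f hf φ hφ =>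
        ⟨MorphismProperty.IsStableUnderColimitsOfShape.condition
          (W := MorphismProperty.monomorphisms _) X₁ X₂ c₁ c₂ h₁ h₂ f
            (fun j => (hf j).1) φ hφ,
          MorphismProperty.IsStableUnderColimitsOfShape.condition
          (W := cokFlat R) X₁ X₂ c₁ c₂ h₁ h₂ f (fun j => (hf j).2) φ hφ⟩ }

instance : (monoFlat R).IsMultiplicative where
  id_mem X := by
    refine ⟨MorphismProperty.id_mem _ _, ?_⟩
    intro n r x _
    exact ⟨0, fun _ => Fin.elim0, Fin.elim0, fun i => ⟨x i, by simp⟩, fun j => j.elim0⟩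
  comp_mem {X Y Z} f g hf hg := by
    refine ⟨MorphismProperty.comp_mem _ _ _ hf.1 hg.1, ?_⟩
    have := RelFlat.trans g.hom ((ModuleCat.mono_iff_injective g).1 hg.1) hf.2 hg.2
    change RelFlat (LinearMap.range (g.hom ∘ₗ f.hom))
    rwa [LinearMap.range_comp]

instance : MorphismProperty.IsStableUnderTransfiniteComposition.{u} (monoFlat R) where
  isStableUnderTransfiniteCompositionOfShape J _ _ _ _ :=
    .of_isStableUnderColimitsOfShape (fun J _ _ _ _ =>
      { condition := fun X₁ X₂ c₁ c₂ h₁ h₂ f hf φ hφ =>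
        ⟨MorphismProperty.IsStableUnderColimitsOfShape.condition
          (W := MorphismProperty.monomorphisms _) X₁ X₂ c₁ c₂ h₁ h₂ f
            (fun j => (hf j).1) φ hφ,
          MorphismProperty.IsStableUnderColimitsOfShape.condition
          (W := cokFlat R) X₁ X₂ c₁ c₂ h₁ h₂ f (fun j => (hf j).2) φ hφ⟩ })

/-- The inclusion of a submodule of the big free module. -/
noncomputable def genHom (K : Submodule R (Term R →₀ R)) :
    ModuleCat.of R K ⟶ ModuleCat.of R (Term R →₀ R) := ModuleCat.ofHom K.subtype

/-- Generating set. -/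
noncomputable def genFlat : MorphismProperty (ModuleCat.{u} R) :=
  MorphismProperty.ofHoms (fun K : {K : Submodule R (Term R →₀ R) // RelFlat K} => genHom R K.1)

lemma genFlat_le : genFlat R ≤ monoFlat R := by
  rintro _ _ _ ⟨K⟩
  refine ⟨(ModuleCat.mono_iff_injective _).2 K.1.injective_subtype, ?_⟩
  change RelFlat (LinearMap.range K.1.subtype)
  rw [Submodule.range_subtype]
  exact K.2

instance : MorphismProperty.IsSmall.{u} (genFlat R) := by
  dsimp [genFlat]
  infer_instance

open MorphismProperty in
instance : HasSmallObjectArgument.{u} (genFlat R) := by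
  let G := ModuleCat.of R (Term R →₀ R)
  obtain ⟨κ, hκ', hκ⟩ := HasCardinalLT.exists_regular_cardinal.{u} (Subobject G)
  have : Fact κ.IsRegular := ⟨hκ'⟩
  have : Nonempty κ.ord.ToType := by simpa using hκ'.ne_zero
  have := WellFoundedLT.toOrderBot κ.ord.ToType
  exact ⟨κ, inferInstance, inferInstance,
    { preservesColimit {A B X Y} i hi f hf := by
        let hf' : (monomorphisms _).TransfiniteCompositionOfShape κ.ord.ToType f :=
          { toTransfiniteCompositionOfShape := hf.toTransfiniteCompositionOfShape
            map_mem j hj := by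
              have := (hf.attachCells j hj).pushouts_coproducts
              simp only [ofHoms_homFamily] at this
              refine ((?_ : _ ≤ monoFlat R) _ this).1
              simp only [pushouts_le_iff, coproducts_le_iff]
              exact genFlat_le R }
        have (j j' : κ.ord.ToType) (φ : j ⟶ j') : Mono (hf'.F.map φ) := hf'.mem_map φ
        apply IsGrothendieckAbelian.preservesColimit_coyoneda_obj_of_mono (Y := hf'.F) (κ := κ)
        obtain ⟨S⟩ := hi
        have : Mono (genHom R S.1) :=
          (ModuleCat.mono_iff_injective _).2 S.1.injective_subtype
        exact Subobject.hasCardinalLT_of_mono hκ (genHom R S.1) }⟩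

lemma llp_rlp_genFlat_le : (genFlat R).rlp.llp ≤ monoFlat R := by
  rw [MorphismProperty.llp_rlp_of_hasSmallObjectArgument.{u}]
  simpa using genFlat_le R

lemma exists_preenvelope (F : ModuleCat.{u} R) (hF : Module.IsFlat R F) :
    ∃ (E : ModuleCat.{u} R) (i : F ⟶ E), Module.IsFlat R E ∧ ExtProp R E ∧
      Function.Injective i ∧ RelFlat (LinearMap.range i.hom) := by
  let fac := (MorphismProperty.functorialFactorizationData (genFlat R).rlp.llp
    (genFlat R).rlp).factorizationData (0 : F ⟶ ModuleCat.of R PUnit.{u+1})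
  have hi := llp_rlp_genFlat_le R _ fac.hi
  have hinj := (ModuleCat.mono_iff_injective fac.i).1 hi.1
  refine ⟨fac.Z, fac.i, isFlat_of_relFlat_range fac.i.hom hinj hF hi.2, ?_, hinj, hi.2⟩
  apply extProp_of_free
  intro K hK f
  have := fac.hp _ (MorphismProperty.ofHoms.mk (ι := {K : Submodule R (Term R →₀ R) // RelFlat K})
    (f := fun K => genHom R K.1) ⟨K, hK⟩)
  have sq : CommSq (ModuleCat.ofHom f) (genHom R K) fac.p 0 := ⟨by
    ext⟩
  have hl : HasLiftingProperty (genHom R K) fac.p := this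
  have hlift : sq.HasLift := hl.sq_hasLift sq
  exact ⟨sq.lift.hom, fun x => ConcreteCategory.congr_hom sq.fac_left x⟩

lemma isCotorsion_of_extProp (C : ModuleCat.{u} R) (hC : ExtProp R C) : C.IsCotorsion := by
  intro F hF
  let P := ProjectiveResolution.of F
  let e := P.isoExt (R := ℤ) 1 C
  have hz : IsZero ((P.complex.linearYonedaObj ℤ C).homology 1) := by
    rw [← HomologicalComplex.exactAt_iff_isZero_homology,
      HomologicalComplex.exactAt_iff' _ 0 1 2 (by simp) (by simp),
      ShortComplex.moduleCat_exact_iff]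
    intro (x : P.complex.X 1 ⟶ C) hx
    replace hx : P.complex.d 2 1 ≫ x = 0 := hx
    have hex1 := (ShortComplex.moduleCat_exact_iff _).1 (P.exact_succ 0)
    have hex0 := (ShortComplex.moduleCat_exact_iff _).1 P.exact₀
    have hk : LinearMap.range (P.complex.d 1 0).hom = LinearMap.ker (P.π.f 0).hom := by
      apply le_antisymm
      · rintro _ ⟨v, rfl⟩
        exact ConcreteCategory.congr_hom P.complex_d_comp_π_f_zero v
      · intro v hv
        exact hex0 v hv
    have hker : LinearMap.ker (P.complex.d 1 0).hom ≤ LinearMap.ker x.hom := by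
      intro v hv
      obtain ⟨w, rfl⟩ := hex1 v hv
      exact ConcreteCategory.congr_hom hx w
    have hsurj : Function.Surjective (P.π.f 0) := (ModuleCat.epi_iff_surjective _).1 inferInstance
    have hrel : RelFlat (LinearMap.range (P.complex.d 1 0).hom) := by
      rw [hk]
      exact (relFlat_ker_iff _ hsurj).2 hF
    obtain ⟨g, hg⟩ := hC _ _ hrel ((Submodule.liftQ _ x.hom hker) ∘ₗ
      (P.complex.d 1 0).hom.quotKerEquivRange.symm.toLinearMap)
    refine ⟨ModuleCat.ofHom g, ?_⟩
    change P.complex.d 1 0 ≫ ModuleCat.ofHom g = x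
    ext v
    have h1 := hg ⟨(P.complex.d 1 0).hom v, ⟨v, rfl⟩⟩
    have h2 : (P.complex.d 1 0).hom.quotKerEquivRange.symm ⟨(P.complex.d 1 0).hom v, ⟨v, rfl⟩⟩ =
        Submodule.Quotient.mk v := by
      rw [LinearEquiv.symm_apply_eq]
      rfl
    refine h1.trans ?_
    simp [h2]
  exact ModuleCat.subsingleton_of_isZero (hz.of_iso e)

end Cat

variable {R : Type u} [Ring R]

lemma relFlat_graph {M E E' : Type*} [AddCommGroup M] [Module R M] [AddCommGroup E] [Module R E]
    [AddCommGroup E'] [Module R E'] (f : M →ₗ[R] E) (hf : Function.Injective f)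
    (hrel : RelFlat (LinearMap.range f)) (g : M →ₗ[R] E') (hE' : Module.IsFlat R E') :
    RelFlat (LinearMap.range (f.prod g)) := by
  intro n r x hx
  obtain ⟨w, hw⟩ := hx
  have hw1 : f w = ∑ i, r i • (x i).1 := by
    have := congrArg Prod.fst hw
    simpa [Prod.fst_sum] using this
  have hw2 : g w = ∑ i, r i • (x i).2 := by
    have := congrArg Prod.snd hw
    simpa [Prod.snd_sum] using this
  obtain ⟨m, a, y, h1, h2⟩ := hrel n r (fun i => (x i).1) ⟨w, hw1⟩
  choose v hv using h1
  have hsum : ∑ i, r i • v i = w := by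
    apply hf
    rw [map_sum, hw1]
    simp only [map_smul, hv, smul_sub, Finset.sum_sub_distrib]
    have : ∑ i, r i • ∑ j, a i j • y j = 0 := by
      simp only [Finset.smul_sum, smul_smul]
      rw [Finset.sum_comm]
      simp only [← Finset.sum_smul, h2, zero_smul, Finset.sum_const_zero]
    rw [this, sub_zero]
  obtain ⟨m', b, z, h3, h4⟩ := hE' n r (fun i => (x i).2 - g (v i)) (by
    simp only [smul_sub, Finset.sum_sub_distrib, ← hw2, ← hsum, map_sum, map_smul, sub_self])
  refine exists_fin _ r x (J := Fin m ⊕ Fin m') (fun i => Sum.elim (a i) (b i))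
    (Sum.elim (fun j => (y j, 0)) (fun j => (0, z j))) (fun i => ⟨v i, ?_⟩) ?_
  · ext
    · simp [Prod.fst_sum, hv]
    · simp [Prod.snd_sum, ← h3]
  · rintro (j | j)
    · exact h2 j
    · exact h4 j

section Cplx

variable (E : ℤ → ModuleCat.{u} R)

/-- The contractible complex. -/
noncomputable def cone : CochainComplex (ModuleCat.{u} R) ℤ :=
  CochainComplex.of (fun n => ModuleCat.of R (E n × E (n + 1)))
    (fun n => ModuleCat.ofHom (LinearMap.prod (LinearMap.snd R (E n) (E (n + 1))) 0))
    (fun n => by ext <;> rfl)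

lemma cone_d (n : ℤ) : (cone E).d n (n + 1) =
    ModuleCat.ofHom (LinearMap.prod (LinearMap.snd R (E n) (E (n + 1))) 0) :=
  CochainComplex.of_d (fun n => ModuleCat.of R (E n × E (n + 1)))
    (fun n => ModuleCat.ofHom (LinearMap.prod (LinearMap.snd R (E n) (E (n + 1))) 0)) n

/-- The contracting homotopy in one degree. -/
noncomputable def coneH (m : ℤ) : (cone E).X (m + 1) ⟶ (cone E).X m :=
  ModuleCat.ofHom (LinearMap.prod 0 (LinearMap.fst R (E (m + 1)) (E (m + 1 + 1))))

lemma cone_contractible : Nonempty (Homotopy (𝟙 (cone E)) 0) := by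
  refine ⟨
    { hom := fun i j => if h : j + 1 = i then
        eqToHom (by rw [h]) ≫ coneH E j else 0
      zero := fun i j h => dif_neg h
      comm := fun i => ?_ }⟩
  obtain ⟨m, rfl⟩ : ∃ m, i = m + 1 := ⟨i - 1, by ring⟩
  rw [dNext_eq _ (show (ComplexShape.up ℤ).Rel (m + 1) (m + 1 + 1) from rfl),
    prevD_eq _ (show (ComplexShape.up ℤ).Rel m (m + 1) from rfl)]
  rw [dif_pos rfl, dif_pos rfl, cone_d, cone_d]
  simp only [eqToHom_refl, Category.id_comp, HomologicalComplex.zero_f, add_zero,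
    HomologicalComplex.id_f]
  apply ModuleCat.hom_ext
  apply LinearMap.ext
  rintro ⟨a, b⟩
  change (a, b) = ((0 : _), b) + (a, (0 : _))
  simp

variable {F : CochainComplex (ModuleCat.{u} R) ℤ} (ι : ∀ n, F.X n ⟶ E n)

/-- The embedding. -/
noncomputable def toCone : F ⟶ cone E where
  f n := ModuleCat.ofHom ((ι n).hom.prod (F.d n (n + 1) ≫ ι (n + 1)).hom)
  comm' := by
    rintro n _ rfl
    rw [cone_d]
    apply ModuleCat.hom_ext
    apply LinearMap.ext
    intro x
    change (ι (n + 1) (F.d n (n + 1) x), (0 : E (n + 1 + 1))) =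
      (ι (n + 1) (F.d n (n + 1) x), ι (n + 1 + 1) (F.d (n + 1) (n + 1 + 1) (F.d n (n + 1) x)))
    have : F.d (n + 1) (n + 1 + 1) (F.d n (n + 1) x) = 0 :=
      ConcreteCategory.congr_hom (F.d_comp_d n (n + 1) (n + 1 + 1)) x
    rw [this, map_zero]

end Cplx

end FlatCot

/-- Every complex of flat left `R`-modules `F•` can be included into a termwise short
exact sequence of complexes `0 → F• → C• → G• → 0` in which `C•` is a contractible
complex of flat cotorsion `R`-modules and `G•` is a complex of flat `R`-modules. -/
theorem exists_embedding_into_contractible_complex_of_flat_cotorsion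
    {R : Type u} [Ring R] (F : CochainComplex (ModuleCat.{u} R) ℤ)
    (hflat : ∀ n : ℤ, Module.IsFlat R (F.X n)) :
    ∃ (C G : CochainComplex (ModuleCat.{u} R) ℤ) (i : F ⟶ C) (p : C ⟶ G),
      (∀ n : ℤ, Module.IsFlat R (C.X n) ∧ (C.X n).IsCotorsion) ∧
      Nonempty (Homotopy (𝟙 C) 0) ∧
      (∀ n : ℤ, Module.IsFlat R (G.X n)) ∧
      (∀ n : ℤ, Function.Injective (i.f n) ∧ Function.Surjective (p.f n) ∧
        Function.Exact (i.f n) (p.f n)) := by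
  choose E ι hE hext hinj hrel using fun n => FlatCot.exists_preenvelope R (F.X n) (hflat n)
  have hi : ∀ n, Function.Injective ((FlatCot.toCone E ι).f n) := by
    intro n x y hxy
    exact hinj n (congrArg Prod.fst hxy)
  have hm : ∀ n, Mono ((FlatCot.toCone E ι).f n) := fun n =>
    (ModuleCat.mono_iff_injective _).2 (hi n)
  have hmono : Mono (FlatCot.toCone E ι) := HomologicalComplex.mono_of_mono_f _ hm
  let S : ShortComplex (CochainComplex (ModuleCat.{u} R) ℤ) :=
    ShortComplex.mk (FlatCot.toCone E ι) (Limits.cokernel.π _) (Limits.cokernel.condition _)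
  have hS : S.ShortExact :=
    { exact := ShortComplex.exact_cokernel _
      mono_f := hmono
      epi_g := inferInstanceAs (Epi (Limits.cokernel.π _)) }
  have hSn := fun n => hS.map_of_exact (HomologicalComplex.eval _ _ n)
  have hsurj : ∀ n, Function.Surjective (S.g.f n) := fun n =>
    (ModuleCat.epi_iff_surjective _).1 (hSn n).epi_g
  have hex : ∀ n, Function.Exact (S.f.f n) (S.g.f n) := fun n =>
    (ShortComplex.ShortExact.moduleCat_exact_iff_function_exact _).1 (hSn n).exact
  refine ⟨FlatCot.cone E, S.X₃, FlatCot.toCone E ι, S.g, fun n => ⟨?_, ?_⟩,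
    FlatCot.cone_contractible E, fun n => ?_, fun n => ⟨hi n, hsurj n, hex n⟩⟩
  · exact FlatCot.isFlat_prod (hE n) (hE (n + 1))
  · exact FlatCot.isCotorsion_of_extProp R _ ((hext n).prod (hext (n + 1)))
  · refine (FlatCot.relFlat_ker_iff (S.g.f n).hom (hsurj n)).1 ?_
    have hk : LinearMap.ker (S.g.f n).hom = LinearMap.range (S.f.f n).hom :=
      (hex n).linearMap_ker_eq
    rw [hk]
    exact FlatCot.relFlat_graph _ (hinj n) (hrel n) _ (hE (n + 1))
end
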